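/- Let n ≥ 1 be an integer and N = p₁^{k₁}···p_r^{k_r} with p₁,…,p_r distinct primes and kᵢ ≥ 1. For every subset S ⊆ (ℤ/Nℤ)ⁿ one has |S| ≥ C_{N,n} · |ℙ(ℤ/Nℤ)^{n-1}|^{-1} · ∑_{u ∈ ℙ(ℤ/Nℤ)^{n-1}} ( max_{a ∈ (ℤ/Nℤ)ⁿ} |{a + t·u : t ∈ ℤ/Nℤ} ∩ S| )ⁿ, where C_{N,n} = ( ∏_{j=1}^{r-1} 1/(k_j·log(p_j) + 1) · ∏_{i=1}^{r} 1/(2(k_i + ⌈log_{p_i}(n)⌉)) )ⁿ and log denotes the natural logarithm. -/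

import Mathlib

/-- A vector in `(ℤ/Nℤ)ⁿ` is primitive (i.e. belongs to a class in `ℙ(ℤ/Nℤ)^{n-1}`)
iff its coordinates generate the unit ideal, equivalently for every prime power factor
`pᵢ^{kᵢ}` of `N`, the reduction mod `pᵢ^{kᵢ}` has a unit coordinate. -/
def IsPrimitiveVec {N n : ℕ} (u : Fin n → ZMod N) : Prop :=
  ∃ v : Fin n → ZMod N, ∑ i, v i * u i = 1

/-- `P` is a fixed set of representatives for the projective space `ℙ(ℤ/Nℤ)^{n-1}`:
each member is primitive and every primitive vector is a unit multiple of a unique member. -/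
def IsProjRepSet (N n : ℕ) [NeZero N] (P : Finset (Fin n → ZMod N)) : Prop :=
  (∀ u ∈ P, IsPrimitiveVec u) ∧
  ∀ u : Fin n → ZMod N, IsPrimitiveVec u →
    ∃! w, w ∈ P ∧ ∃ c : (ZMod N)ˣ, u = (c : ZMod N) • w

/-- The line `{a + t·u : t ∈ ℤ/Nℤ}` in `(ℤ/Nℤ)ⁿ`, as a finite set. -/
def lineF {N n : ℕ} [NeZero N] (a u : Fin n → ZMod N) : Finset (Fin n → ZMod N) :=
  Finset.image (fun t : ZMod N => a + t • u) Finset.univ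

open Finset Matrix

/-!
Averaging over all primitive directions instead of a set of representatives changes nothing, and
makes the inequality behave well under products of rings: slice `S ⊆ (R₀ × R₁)^ι` into fibres over
`R₁^ι`, and apply the inequality over `R₁` to the level sets of the maximal function of the slices.
Summing over the levels loses only a harmonic sum, at most `log |R₀| + 1`. The Chinese remainder
theorem then leaves the rings `ℤ/p^k`.

Let `m = p^l ≥ n` and `K = k + l`, and let `ζ` be a primitive `p^k`-th root of unity in a domain of
characteristic zero, with a reduction to `𝔽_p` taking `ζ` to `1`. A combination of monomials with
exponents in `(ℤ/p^K)^n` that vanishes to order `m` at the points `ζ^x`, `x ∈ S`, restricts to the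
image of a line as a polynomial divisible by `∏ (X - (ζ^t - 1))^m`, the product being over the
parameters `t` at which the line meets `S`. At `ζ = 1` this divisor becomes a power of `X`, and the
remainder of the monomial `e` has the coefficients `(u · e).choose j`. Hence if functions
`e ↦ (u · e).choose j` modulo `p` are linearly independent, and each `j` is less than `m` times the
maximal function of `S` at `u`, then there are at most as many of them as vanishing conditions:
`|S|` times the number of exponent vectors of degree less than `m`.

Conversely, the functions with `u` primitive and `j < q` span a space whose dimension is at least
the number of exponent vectors of degree less than `q / K`, because
`∏_{s < j} ((1 + X)^j - (1 + X)^s)` vanishes to order at most `K j` at `0`. Choose linearly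
independent functions greedily by increasing `j`. Independence is preserved when `GL_n` acts on the
directions, and since this action is transitive on primitive vectors, averaging the upper bound
over the group distributes the functions evenly over the directions.
-/

open Finset Matrix

section LayerCake

theorem sum_comp_eq_sum_range_mul_card {α R : Type*} [Ring R] (s : Finset α) {f : α → ℕ} {q : ℕ}
    (hf : ∀ x ∈ s, f x ≤ q) {g : ℕ → R} (hg : g 0 = 0) :
    ∑ x ∈ s, g (f x) = ∑ i ∈ range q, (g (i + 1) - g i) * #{x ∈ s | i < f x} := by
  have layers (x) (hx : x ∈ s) :
      g (f x) = ∑ i ∈ range q, (g (i + 1) - g i) * if i < f x then 1 else 0 := by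
    have : {i ∈ range q | i < f x} = range (f x) := by
      ext i
      simpa using fun hi ↦ hi.trans_le (hf x hx)
    simp only [mul_ite, mul_one, mul_zero]
    rw [← sum_filter, this, sum_range_sub, hg, sub_zero]
  rw [sum_congr rfl layers, sum_comm]
  exact sum_congr rfl fun i _ ↦ by rw [← mul_sum, sum_boole]

theorem mul_pow_le_sum_range_of_antitone {d : ℕ} (hd : d ≠ 0) {m : ℕ → ℝ} (m_nonneg : ∀ i, 0 ≤ m i)
    (hm : Antitone m) {i q : ℕ} (hi : i < q) :
    ((i + 1) * m i) ^ d ≤ ∑ j ∈ range q, ((j + 1) ^ d - j ^ d) * m j ^ d := by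
  have sub_nonneg (j : ℕ) : (0 : ℝ) ≤ (j + 1) ^ d - j ^ d := by
    rw [_root_.sub_nonneg]
    gcongr
    simp
  calc ((i + 1) * m i) ^ d = ∑ j ∈ range (i + 1), ((j + 1) ^ d - j ^ d) * m i ^ d := by
        have := sum_range_sub (fun j : ℕ ↦ (j : ℝ) ^ d) (i + 1)
        push_cast at this
        rw [← sum_mul, this, zero_pow hd, sub_zero, mul_pow]
    _ ≤ ∑ j ∈ range (i + 1), ((j + 1) ^ d - j ^ d) * m j ^ d := by
        gcongr with j hj
        · exact sub_nonneg j
        · exact m_nonneg i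
        · exact hm (Nat.lt_succ_iff.1 (mem_range.1 hj))
    _ ≤ ∑ j ∈ range q, ((j + 1) ^ d - j ^ d) * m j ^ d :=
        sum_le_sum_of_subset_of_nonneg (range_subset_range.2 hi) fun j _ _ ↦
          mul_nonneg (sub_nonneg j) (pow_nonneg (m_nonneg j) d)

theorem pow_sum_range_le_harmonic_pow_mul {d : ℕ} (hd : d ≠ 0) {m : ℕ → ℝ}
    (m_nonneg : ∀ i, 0 ≤ m i) (hm : Antitone m) (q : ℕ) :
    (∑ j ∈ range q, m j) ^ d ≤
      (harmonic q : ℝ) ^ d * ∑ j ∈ range q, ((j + 1) ^ d - j ^ d) * m j ^ d := by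
  rcases q.eq_zero_or_pos with rfl | hq
  · simp [hd]
  obtain ⟨i, hi, i_max⟩ := exists_max_image (range q) (fun j : ℕ ↦ (j + 1) * m j)
    (nonempty_range_iff.2 hq.ne')
  have sum_le : ∑ j ∈ range q, m j ≤ harmonic q * ((i + 1) * m i) := by
    rw [harmonic, Rat.cast_sum, sum_mul]
    refine sum_le_sum fun j hj ↦ ?_
    push_cast
    rw [← div_eq_inv_mul, le_div_iff₀ (by positivity), mul_comm]
    exact i_max j hj
  calc (∑ j ∈ range q, m j) ^ d ≤ (harmonic q * ((i + 1) * m i)) ^ d :=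
        pow_le_pow_left₀ (sum_nonneg fun j _ ↦ m_nonneg j) sum_le d
    _ ≤ _ := by
        rw [mul_pow]
        exact mul_le_mul_of_nonneg_left
          (mul_pow_le_sum_range_of_antitone hd m_nonneg hm (mem_range.1 hi))
          (pow_nonneg (by exact_mod_cast (harmonic_pos hq.ne').le) d)

end LayerCake

section Kakeya

variable {ι R R' : Type*} [Fintype ι] [DecidableEq ι]
  [CommRing R] [Fintype R] [DecidableEq R] [CommRing R'] [Fintype R'] [DecidableEq R']

variable (ι R) in
/-- The primitive (or unimodular) vectors: those whose coordinates generate the unit ideal. Up to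
units they are the points of the projective space over `R`. -/
def primitiveVectors : Finset (ι → R) :=
  {u | ∃ v : ι → R, v ⬝ᵥ u = 1}

/-- The Kakeya maximal function of `S`: the largest intersection of `S` with a line of direction
`u`. Parameters `t` rather than points are counted, which is the same for primitive `u`. -/
def kakeyaMaximal (S : Finset (ι → R)) (u : ι → R) : ℕ :=
  univ.sup fun a ↦ #{t : R | a + t • u ∈ S}

variable (ι R) in
/-- The Kakeya maximal inequality with exponent `d` and constant `C ^ d`, averaged over all
primitive directions. The constant `C` stands inside the power because such constants multiply
under products of rings. -/
def KakeyaBound (d : ℕ) (C : ℝ) : Prop :=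
  ∀ S : Finset (ι → R),
    ∑ u ∈ primitiveVectors ι R, (C * kakeyaMaximal S u) ^ d ≤ #(primitiveVectors ι R) * #S

theorem mem_primitiveVectors {u : ι → R} :
    u ∈ primitiveVectors ι R ↔ ∃ v : ι → R, v ⬝ᵥ u = 1 := by
  simp [primitiveVectors]

theorem comp_mem_primitiveVectors (f : R →+* R') {u : ι → R} (hu : u ∈ primitiveVectors ι R) :
    f ∘ u ∈ primitiveVectors ι R' := by
  obtain ⟨v, hv⟩ := mem_primitiveVectors.1 hu
  exact mem_primitiveVectors.2 ⟨f ∘ v, by rw [← RingHom.map_dotProduct, hv, map_one]⟩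

theorem units_smul_mem_primitiveVectors {u : ι → R} (hu : u ∈ primitiveVectors ι R) (c : Rˣ) :
    c • u ∈ primitiveVectors ι R := by
  obtain ⟨v, hv⟩ := mem_primitiveVectors.1 hu
  exact mem_primitiveVectors.2
    ⟨c⁻¹ • v, by rw [smul_dotProduct, dotProduct_smul, inv_smul_smul, hv]⟩

theorem units_smul_left_injective_of_mem_primitiveVectors {u : ι → R}
    (hu : u ∈ primitiveVectors ι R) : Function.Injective fun c : Rˣ ↦ c • u := by
  obtain ⟨v, hv⟩ := mem_primitiveVectors.1 hu
  intro c c' h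
  simpa [Units.smul_def, hv, Units.ext_iff] using congrArg (v ⬝ᵥ ·) h

theorem card_le_kakeyaMaximal (S : Finset (ι → R)) (u a : ι → R) :
    #{t : R | a + t • u ∈ S} ≤ kakeyaMaximal S u :=
  le_sup (f := fun a ↦ #{t : R | a + t • u ∈ S}) (mem_univ a)

theorem exists_kakeyaMaximal_eq (S : Finset (ι → R)) (u : ι → R) :
    ∃ a, kakeyaMaximal S u = #{t : R | a + t • u ∈ S} := by
  obtain ⟨a, -, ha⟩ := exists_mem_eq_sup univ univ_nonempty fun a ↦ #{t : R | a + t • u ∈ S}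
  exact ⟨a, ha⟩

theorem kakeyaMaximal_le_card (S : Finset (ι → R)) (u : ι → R) :
    kakeyaMaximal S u ≤ Fintype.card R :=
  Finset.sup_le fun _ _ ↦ card_le_univ _

theorem kakeyaMaximal_le_of_injective {S : Finset (ι → R)} {S' : Finset (ι → R')}
    {u : ι → R} {u' : ι → R'} (f : (ι → R) → ι → R') {g : R → R'} (hg : Function.Injective g)
    (h : ∀ a t, a + t • u ∈ S → f a + g t • u' ∈ S') :
    kakeyaMaximal S u ≤ kakeyaMaximal S' u' := by
  refine Finset.sup_le fun a _ ↦ le_trans ?_ (card_le_kakeyaMaximal S' u' (f a))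
  exact card_le_card_of_injOn g (fun t ht ↦ by simpa using h a t (by simpa using ht)) hg.injOn

theorem kakeyaMaximal_mono {S T : Finset (ι → R)} (hST : S ⊆ T) (u : ι → R) :
    kakeyaMaximal S u ≤ kakeyaMaximal T u :=
  kakeyaMaximal_le_of_injective id Function.injective_id fun _ _ h ↦ hST h

theorem kakeyaMaximal_units_smul (S : Finset (ι → R)) (c : Rˣ) (u : ι → R) :
    kakeyaMaximal S (c • u) = kakeyaMaximal S u := by
  refine le_antisymm
    (kakeyaMaximal_le_of_injective id (MulAction.injective c) fun a t h ↦ ?_)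
    (kakeyaMaximal_le_of_injective id (MulAction.injective c⁻¹) fun a t h ↦ ?_)
  · rwa [id, smul_assoc, smul_comm c t u]
  · rwa [id, smul_assoc, smul_comm t c u, inv_smul_smul]

theorem kakeyaMaximal_comp_ringEquiv (e : R ≃+* R') (S : Finset (ι → R')) (u : ι → R) :
    kakeyaMaximal S (e ∘ u) = kakeyaMaximal {x | e ∘ x ∈ S} u := by
  refine le_antisymm (kakeyaMaximal_le_of_injective (e.symm ∘ ·) e.symm.injective fun a t h ↦ ?_)
    (kakeyaMaximal_le_of_injective (e ∘ ·) e.injective fun a t h ↦ ?_)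
  · rw [mem_filter_univ]
    convert h using 1
    ext i
    simp
  · convert (mem_filter_univ _).1 h using 1
    ext i
    simp

theorem KakeyaBound.of_ringEquiv (e : R ≃+* R') {d : ℕ} {C : ℝ} (h : KakeyaBound ι R d C) :
    KakeyaBound ι R' d C := by
  intro S
  let E : (ι → R) ≃ (ι → R') := .piCongrRight fun _ ↦ e.toEquiv
  have mem_iff (u : ι → R) : u ∈ primitiveVectors ι R ↔ E u ∈ primitiveVectors ι R' := by
    refine ⟨comp_mem_primitiveVectors (e : R →+* R'), fun hu ↦ ?_⟩
    simpa [E, Function.comp_def] using comp_mem_primitiveVectors (e.symm : R' →+* R) hu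
  have card_eq : #(primitiveVectors ι R) = #(primitiveVectors ι R') := card_equiv E mem_iff
  have card_preimage : #{x : ι → R | e ∘ x ∈ S} = #S := card_equiv E fun x ↦ by
    rw [mem_filter_univ]; rfl
  calc ∑ u ∈ primitiveVectors ι R', (C * kakeyaMaximal S u) ^ d
      = ∑ u ∈ primitiveVectors ι R, (C * kakeyaMaximal {x | e ∘ x ∈ S} u) ^ d :=
        (sum_equiv E mem_iff fun u _ ↦ by rw [← kakeyaMaximal_comp_ringEquiv]; rfl).symm
    _ ≤ #(primitiveVectors ι R') * #S := by
        rw [← card_eq, ← card_preimage]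
        exact h _

end Kakeya

section Product

variable {ι R₀ R₁ : Type*} [Fintype ι] [DecidableEq ι]
  [Fintype R₀] [DecidableEq R₀] [Fintype R₁] [DecidableEq R₁]

/-- The fibre of `S` over `y`, for the projection `(R₀ × R₁)^ι → R₁^ι`. -/
def sliceAt (S : Finset (ι → R₀ × R₁)) (y : ι → R₁) : Finset (ι → R₀) :=
  {x | Function.prod x y ∈ S}

theorem sum_card_sliceAt (S : Finset (ι → R₀ × R₁)) : ∑ y, #(sliceAt S y) = #S := by
  simp only [sliceAt, card_filter]
  rw [sum_comm, ← Fintype.sum_prod_type', ← card_filter]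
  exact card_equiv (Equiv.arrowProdEquivProdArrow ι (fun _ ↦ R₀) (fun _ ↦ R₁)).symm fun _ ↦ by
    rw [mem_filter_univ]
    rfl

variable [CommRing R₀]

/-- The super-level sets of the maximal function of the slices of `S` in direction `u`. -/
def richSlices (S : Finset (ι → R₀ × R₁)) (u : ι → R₀) (j : ℕ) : Finset (ι → R₁) :=
  {y | j < kakeyaMaximal (sliceAt S y) u}

theorem richSlices_antitone (S : Finset (ι → R₀ × R₁)) (u : ι → R₀) : Antitone (richSlices S u) :=
  fun _ _ hij ↦ monotone_filter_right _ fun _ _ h ↦ hij.trans_lt h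

theorem sum_kakeyaMaximal_sliceAt_pow (S : Finset (ι → R₀ × R₁)) (u : ι → R₀) {d : ℕ} (hd : d ≠ 0) :
    ∑ y, (kakeyaMaximal (sliceAt S y) u : ℝ) ^ d =
      ∑ j ∈ range (Fintype.card R₀), (((j : ℝ) + 1) ^ d - j ^ d) * #(richSlices S u j) := by
  have := sum_comp_eq_sum_range_mul_card univ (g := fun i : ℕ ↦ (i : ℝ) ^ d)
    (fun y _ ↦ kakeyaMaximal_le_card (sliceAt S y) u) (by simp [hd])
  push_cast at this
  exact this

variable [CommRing R₁]

theorem prod_mem_primitiveVectors {x : ι → R₀} {y : ι → R₁} :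
    Function.prod x y ∈ primitiveVectors ι (R₀ × R₁) ↔
      x ∈ primitiveVectors ι R₀ ∧ y ∈ primitiveVectors ι R₁ := by
  refine ⟨fun h ↦ ⟨comp_mem_primitiveVectors (RingHom.fst R₀ R₁) h,
    comp_mem_primitiveVectors (RingHom.snd R₀ R₁) h⟩, fun ⟨hx, hy⟩ ↦ ?_⟩
  obtain ⟨v, hv⟩ := mem_primitiveVectors.1 hx
  obtain ⟨w, hw⟩ := mem_primitiveVectors.1 hy
  refine mem_primitiveVectors.2 ⟨Function.prod v w, Prod.ext ?_ ?_⟩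
  · simpa [dotProduct, Prod.fst_sum] using hv
  · simpa [dotProduct, Prod.snd_sum] using hw

theorem sum_primitiveVectors_prod {M : Type*} [AddCommMonoid M] (F : (ι → R₀ × R₁) → M) :
    ∑ z ∈ primitiveVectors ι (R₀ × R₁), F z =
      ∑ x ∈ primitiveVectors ι R₀, ∑ y ∈ primitiveVectors ι R₁, F (Function.prod x y) := by
  rw [← sum_product']
  exact sum_equiv (Equiv.arrowProdEquivProdArrow ι (fun _ ↦ R₀) (fun _ ↦ R₁))
    (fun z ↦ by rw [mem_product, ← prod_mem_primitiveVectors]; rfl) fun _ _ ↦ rfl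

theorem card_primitiveVectors_prod :
    #(primitiveVectors ι (R₀ × R₁)) = #(primitiveVectors ι R₀) * #(primitiveVectors ι R₁) := by
  simp only [card_eq_sum_ones, sum_primitiveVectors_prod, ← sum_product', sum_mul_sum, mul_one]

theorem kakeyaMaximal_prod_le_sum_sliceAt (S : Finset (ι → R₀ × R₁)) (u₀ : ι → R₀) (u₁ : ι → R₁) :
    ∃ b : ι → R₁, kakeyaMaximal S (Function.prod u₀ u₁) ≤
      ∑ t : R₁, kakeyaMaximal (sliceAt S (b + t • u₁)) u₀ := by
  obtain ⟨a, ha⟩ := exists_kakeyaMaximal_eq S (Function.prod u₀ u₁)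
  refine ⟨Prod.snd ∘ a, ?_⟩
  rw [ha, card_filter, Fintype.sum_prod_type_right]
  refine sum_le_sum fun t₁ _ ↦ ?_
  rw [← card_filter]
  refine (card_le_card fun t₀ h ↦ ?_).trans (card_le_kakeyaMaximal _ u₀ (Prod.fst ∘ a))
  simp only [sliceAt, mem_filter_univ] at h ⊢
  exact h

theorem kakeyaMaximal_prod_le_sum_richSlices (S : Finset (ι → R₀ × R₁)) (u₀ : ι → R₀)
    (u₁ : ι → R₁) :
    kakeyaMaximal S (Function.prod u₀ u₁) ≤
      ∑ j ∈ range (Fintype.card R₀), kakeyaMaximal (richSlices S u₀ j) u₁ := by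
  obtain ⟨b, hb⟩ := kakeyaMaximal_prod_le_sum_sliceAt S u₀ u₁
  have layers := sum_comp_eq_sum_range_mul_card univ (g := ((↑) : ℕ → ℤ))
    (fun (t : R₁) _ ↦ kakeyaMaximal_le_card (sliceAt S (b + t • u₁)) u₀) Nat.cast_zero
  push_cast at layers
  simp only [add_sub_cancel_left, one_mul] at layers
  norm_cast at layers
  rw [layers] at hb
  refine hb.trans (sum_le_sum fun j _ ↦ (card_le_card ?_).trans (card_le_kakeyaMaximal _ u₁ b))
  exact monotone_filter_right _ fun t _ ht ↦ (mem_filter_univ _).2 ht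

theorem mul_kakeyaMaximal_prod_pow_le (S : Finset (ι → R₀ × R₁)) (u₀ : ι → R₀) (u₁ : ι → R₁)
    {d : ℕ} (hd : d ≠ 0) :
    (1 / (Real.log (Fintype.card R₀) + 1) * kakeyaMaximal S (Function.prod u₀ u₁)) ^ d ≤
      ∑ j ∈ range (Fintype.card R₀),
        (((j : ℝ) + 1) ^ d - j ^ d) * kakeyaMaximal (richSlices S u₀ j) u₁ ^ d := by
  set q := Fintype.card R₀
  have q_pos : 0 < q := Fintype.card_pos
  have harmonic_pos : (0 : ℝ) < harmonic q := by exact_mod_cast harmonic_pos q_pos.ne'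
  have harmonic_le : (harmonic q : ℝ) ≤ Real.log q + 1 := by
    rw [add_comm]
    exact harmonic_le_one_add_log q
  calc (1 / (Real.log q + 1) * kakeyaMaximal S (Function.prod u₀ u₁) : ℝ) ^ d
      ≤ (1 / harmonic q *
          ∑ j ∈ range q, (kakeyaMaximal (richSlices S u₀ j) u₁ : ℝ)) ^ d := by
        gcongr
        exact_mod_cast kakeyaMaximal_prod_le_sum_richSlices S u₀ u₁
    _ ≤ _ := by
        rw [mul_pow, one_div, inv_pow, ← div_eq_inv_mul, div_le_iff₀' (by positivity)]
        exact pow_sum_range_le_harmonic_pow_mul hd (fun _ ↦ Nat.cast_nonneg _)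
          (fun _ _ hij ↦ Nat.cast_le.2 (kakeyaMaximal_mono (richSlices_antitone S u₀ hij) u₁)) q

theorem KakeyaBound.sum_mul_kakeyaMaximal_prod_pow_le {d : ℕ} (hd : d ≠ 0) {C : ℝ} (hC : 0 ≤ C)
    (h : KakeyaBound ι R₁ d C) (S : Finset (ι → R₀ × R₁)) (u₀ : ι → R₀) :
    ∑ u₁ ∈ primitiveVectors ι R₁,
        (C * (1 / (Real.log (Fintype.card R₀) + 1) * kakeyaMaximal S (Function.prod u₀ u₁))) ^ d ≤
      #(primitiveVectors ι R₁) * ∑ y, (kakeyaMaximal (sliceAt S y) u₀ : ℝ) ^ d := by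
  rw [sum_kakeyaMaximal_sliceAt_pow S u₀ hd]
  calc _ ≤ ∑ u₁ ∈ primitiveVectors ι R₁, ∑ j ∈ range (Fintype.card R₀),
          (((j : ℝ) + 1) ^ d - j ^ d) * (C * kakeyaMaximal (richSlices S u₀ j) u₁) ^ d := by
        refine sum_le_sum fun u₁ _ ↦ ?_
        simp only [mul_pow C, mul_left_comm _ (C ^ d), ← mul_sum]
        gcongr
        exact mul_kakeyaMaximal_prod_pow_le S u₀ u₁ hd
    _ ≤ _ := by
        rw [sum_comm, mul_sum]
        refine sum_le_sum fun j _ ↦ ?_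
        rw [← mul_sum, mul_left_comm]
        refine mul_le_mul_of_nonneg_left (h _) (sub_nonneg.2 ?_)
        gcongr
        simp

theorem KakeyaBound.prod {d : ℕ} (hd : d ≠ 0) {C₀ C₁ : ℝ} (hC₀ : 0 ≤ C₀) (hC₁ : 0 ≤ C₁)
    (h₀ : KakeyaBound ι R₀ d C₀) (h₁ : KakeyaBound ι R₁ d C₁) :
    KakeyaBound ι (R₀ × R₁) d (C₀ * C₁ * (1 / (Real.log (Fintype.card R₀) + 1))) := by
  intro S
  set H := Real.log (Fintype.card R₀) + 1
  rw [sum_primitiveVectors_prod, card_primitiveVectors_prod, ← sum_card_sliceAt S]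
  calc ∑ u₀ ∈ primitiveVectors ι R₀, ∑ u₁ ∈ primitiveVectors ι R₁,
        (C₀ * C₁ * (1 / H) * kakeyaMaximal S (Function.prod u₀ u₁)) ^ d
      = ∑ u₀ ∈ primitiveVectors ι R₀, C₀ ^ d * ∑ u₁ ∈ primitiveVectors ι R₁,
          (C₁ * (1 / H * kakeyaMaximal S (Function.prod u₀ u₁))) ^ d := by
        simp only [mul_sum, mul_assoc, mul_pow]
    _ ≤ ∑ u₀ ∈ primitiveVectors ι R₀, C₀ ^ d *
          (#(primitiveVectors ι R₁) * ∑ y, (kakeyaMaximal (sliceAt S y) u₀ : ℝ) ^ d) := by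
        gcongr with u₀
        exact h₁.sum_mul_kakeyaMaximal_prod_pow_le hd hC₁ S u₀
    _ = #(primitiveVectors ι R₁) * ∑ y, ∑ u₀ ∈ primitiveVectors ι R₀,
          (C₀ * kakeyaMaximal (sliceAt S y) u₀) ^ d := by
        rw [sum_comm]
        simp only [mul_sum, mul_pow, mul_left_comm]
    _ ≤ #(primitiveVectors ι R₁) * ∑ y, #(primitiveVectors ι R₀) * (#(sliceAt S y) : ℝ) := by
        gcongr with y
        exact h₀ (sliceAt S y)
    _ = _ := by
        rw [← mul_sum]
        push_cast
        ring

end Product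

section ProjectiveRepresentatives

variable {N n : ℕ} [NeZero N] {P : Finset (Fin n → ZMod N)}

theorem isPrimitiveVec_iff {u : Fin n → ZMod N} :
    IsPrimitiveVec u ↔ u ∈ primitiveVectors (Fin n) (ZMod N) :=
  mem_primitiveVectors.symm

theorem IsProjRepSet.sum_primitiveVectors {M : Type*} [AddCommMonoid M] (hP : IsProjRepSet N n P)
    (F : (Fin n → ZMod N) → M) :
    ∑ u ∈ primitiveVectors (Fin n) (ZMod N), F u = ∑ w ∈ P, ∑ c : (ZMod N)ˣ, F (c • w) := by
  rw [← sum_product']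
  refine (sum_bij (fun wc _ ↦ wc.2 • wc.1) ?_ ?_ ?_ fun _ _ ↦ rfl).symm
  · rintro ⟨w, c⟩ hwc
    exact units_smul_mem_primitiveVectors
      (isPrimitiveVec_iff.1 (hP.1 w (mem_product.1 hwc).1)) c
  · rintro ⟨w, c⟩ hwc ⟨w', c'⟩ hwc' h
    have hw := (mem_product.1 hwc).1
    have hw' := (mem_product.1 hwc').1
    have prim := isPrimitiveVec_iff.1 (hP.1 w hw)
    obtain rfl : w = w' := (hP.2 (c • w) (isPrimitiveVec_iff.2
      (units_smul_mem_primitiveVectors prim c))).unique ⟨hw, c, rfl⟩ ⟨hw', c', h⟩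
    exact Prod.ext rfl (units_smul_left_injective_of_mem_primitiveVectors prim h)
  · intro u hu
    obtain ⟨w, ⟨hw, c, hc⟩, -⟩ := hP.2 u (isPrimitiveVec_iff.2 hu)
    exact ⟨(w, c), mem_product.2 ⟨hw, mem_univ c⟩, hc.symm⟩

theorem IsProjRepSet.sum_kakeyaMaximal_pow_le {d : ℕ} {C : ℝ} (hP : IsProjRepSet N n P)
    (h : KakeyaBound (Fin n) (ZMod N) d C) (S : Finset (Fin n → ZMod N)) :
    ∑ u ∈ P, (C * kakeyaMaximal S u) ^ d ≤ #P * #S := by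
  have card_eq : #(primitiveVectors (Fin n) (ZMod N)) = #P * Fintype.card (ZMod N)ˣ := by
    simpa [-ZMod.card_units_eq_totient] using hP.sum_primitiveVectors fun _ ↦ (1 : ℕ)
  have bound := h S
  simp only [hP.sum_primitiveVectors, kakeyaMaximal_units_smul, sum_const, card_univ, card_eq,
    nsmul_eq_mul, ← mul_sum] at bound
  refine le_of_mul_le_mul_left (bound.trans_eq ?_)
    (Nat.cast_pos.2 (Fintype.card_pos (α := (ZMod N)ˣ)))
  push_cast
  ring

theorem card_lineF_inter_le_kakeyaMaximal (S : Finset (Fin n → ZMod N)) (a u : Fin n → ZMod N) :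
    #(lineF a u ∩ S) ≤ kakeyaMaximal S u := by
  refine (card_le_card fun x hx ↦ ?_).trans <|
    (card_image_le (f := fun t : ZMod N ↦ a + t • u)).trans (card_le_kakeyaMaximal S u a)
  obtain ⟨hxl, hxS⟩ := mem_inter.1 hx
  obtain ⟨t, -, rfl⟩ := mem_image.1 hxl
  exact mem_image_of_mem _ ((mem_filter_univ t).2 hxS)

theorem IsProjRepSet.mul_sum_sup_lineF_pow_le {d : ℕ} {C : ℝ} (hC : 0 ≤ C)
    (hP : IsProjRepSet N n P) (h : KakeyaBound (Fin n) (ZMod N) d C)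
    (S : Finset (Fin n → ZMod N)) :
    C ^ d * (#P : ℝ)⁻¹ * ∑ u ∈ P, ((univ.sup fun a ↦ #(lineF a u ∩ S) : ℕ) : ℝ) ^ d ≤ #S := by
  rcases P.eq_empty_or_nonempty with rfl | hne
  · simp
  have sum_le : ∑ u ∈ P, ((univ.sup fun a ↦ #(lineF a u ∩ S) : ℕ) : ℝ) ^ d ≤
      ∑ u ∈ P, (kakeyaMaximal S u : ℝ) ^ d := by
    gcongr with u
    exact Finset.sup_le fun a _ ↦ card_lineF_inter_le_kakeyaMaximal S a u
  have bound := hP.sum_kakeyaMaximal_pow_le h S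
  simp only [mul_pow, ← mul_sum] at bound
  rw [mul_right_comm, ← div_eq_mul_inv, div_le_iff₀' (by simpa using hne)]
  exact (mul_le_mul_of_nonneg_left sum_le (pow_nonneg hC d)).trans bound

end ProjectiveRepresentatives

section LinearGroup

theorem card_smul_sum_smul_eq {G X M : Type*} [Group G] [Fintype G] [MulAction G X]
    [AddCommMonoid M] {s : Finset X} (smul_mem : ∀ g : G, ∀ x ∈ s, g • x ∈ s)
    (transitive : ∀ x ∈ s, ∀ y ∈ s, ∃ g : G, g • x = y) (F : X → M) {x : X} (hx : x ∈ s) :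
    #s • ∑ g : G, F (g • x) = Fintype.card G • ∑ y ∈ s, F y := by
  have sum_orbit (y) (hy : y ∈ s) : ∑ g : G, F (g • x) = ∑ g : G, F (g • y) := by
    obtain ⟨h, rfl⟩ := transitive x hx y hy
    exact (Fintype.sum_equiv (Equiv.mulRight h) _ _ fun g ↦ by simp [mul_smul]).symm
  have sum_translate (g : G) : ∑ y ∈ s, F (g • y) = ∑ y ∈ s, F y :=
    sum_nbij' (g • ·) (g⁻¹ • ·) (smul_mem g) (smul_mem g⁻¹) (fun y _ ↦ inv_smul_smul g y)
      (fun y _ ↦ smul_inv_smul g y) fun _ _ ↦ rfl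
  rw [← sum_const, sum_congr rfl sum_orbit, sum_comm, Fintype.sum_congr _ _ sum_translate,
    sum_const, card_univ]

variable {ι R R' : Type*} [Fintype ι] [DecidableEq ι]
  [CommRing R] [CommRing R']

theorem comp_GL_smul (f : R →+* R') (g : GL ι R) (u : ι → R) :
    f ∘ (g • u) = GeneralLinearGroup.map f g • (f ∘ u) :=
  funext fun i ↦ RingHom.map_mulVec f g.1 u i

theorem exists_GL_smul_single_eq {u : ι → R} {i : ι} (hi : IsUnit (u i)) :
    ∃ g : GL ι R, g • Pi.single i (1 : R) = u := by
  have det_eq : ((1 : Matrix ι ι R).updateCol i u).det = u i := by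
    rw [← cramer_apply, cramer_one]
    rfl
  obtain ⟨g, hg⟩ := (isUnit_iff_isUnit_det _).2 (det_eq ▸ hi)
  refine ⟨g, ?_⟩
  change g.1 *ᵥ Pi.single i 1 = u
  rw [hg, mulVec_single_one]
  ext j
  simp

variable [Fintype R] [DecidableEq R] [Fintype R'] [DecidableEq R']

theorem GL_smul_mem_primitiveVectors (g : GL ι R) {u : ι → R} (hu : u ∈ primitiveVectors ι R) :
    g • u ∈ primitiveVectors ι R := by
  obtain ⟨v, hv⟩ := mem_primitiveVectors.1 hu
  refine mem_primitiveVectors.2 ⟨v ᵥ* (g⁻¹ : GL ι R).1, ?_⟩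
  rw [← dotProduct_mulVec]
  exact (congrArg (v ⬝ᵥ ·) (inv_smul_smul g u)).trans hv

theorem mem_primitiveVectors_of_isUnit {u : ι → R} {i : ι} (hi : IsUnit (u i)) :
    u ∈ primitiveVectors ι R := by
  obtain ⟨x, hx⟩ := hi.exists_left_inv
  exact mem_primitiveVectors.2 ⟨Pi.single i x, by rw [single_dotProduct, hx]⟩

theorem mem_primitiveVectors_iff_exists_isUnit [IsLocalRing R] {u : ι → R} :
    u ∈ primitiveVectors ι R ↔ ∃ i, IsUnit (u i) := by
  refine ⟨fun hu ↦ ?_, fun ⟨_, hi⟩ ↦ mem_primitiveVectors_of_isUnit hi⟩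
  obtain ⟨v, hv⟩ := mem_primitiveVectors.1 hu
  obtain ⟨i, -, hi⟩ := IsLocalRing.exists_of_isUnit_sum (hv ▸ isUnit_one : IsUnit (v ⬝ᵥ u))
  exact ⟨i, isUnit_of_mul_isUnit_right hi⟩

theorem exists_GL_smul_eq [IsLocalRing R] {u v : ι → R} (hu : u ∈ primitiveVectors ι R)
    (hv : v ∈ primitiveVectors ι R) : ∃ g : GL ι R, g • u = v := by
  have exists_smul_one {w : ι → R} (hw : w ∈ primitiveVectors ι R) :
      ∃ g : GL ι R, g • (1 : ι → R) = w := by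
    obtain ⟨i, hi⟩ := mem_primitiveVectors_iff_exists_isUnit.1 hw
    obtain ⟨g, hg⟩ := exists_GL_smul_single_eq hi
    obtain ⟨h, hh⟩ := exists_GL_smul_single_eq (u := (1 : ι → R)) (i := i) isUnit_one
    exact ⟨g * h⁻¹, by rw [← hh, mul_smul, inv_smul_smul, hg]⟩
  obtain ⟨g, rfl⟩ := exists_smul_one hu
  obtain ⟨h, rfl⟩ := exists_smul_one hv
  exact ⟨h * g⁻¹, by rw [mul_smul, inv_smul_smul]⟩

theorem exists_mem_primitiveVectors_comp_eq [IsLocalRing R] [IsLocalRing R'] {f : R →+* R'}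
    (hf : Function.Surjective f) {v : ι → R'} (hv : v ∈ primitiveVectors ι R') :
    ∃ u ∈ primitiveVectors ι R, f ∘ u = v := by
  have := IsLocalHom.of_surjective f hf
  obtain ⟨u, rfl⟩ := hf.comp_left v
  obtain ⟨i, hi⟩ := mem_primitiveVectors_iff_exists_isUnit.1 hv
  exact ⟨u, mem_primitiveVectors_iff_exists_isUnit.2 ⟨i, isUnit_of_map_unit f (u i) hi⟩, rfl⟩

theorem card_primitiveVectors_smul_sum_GL [IsLocalRing R] [IsLocalRing R'] {M : Type*}
    [AddCommMonoid M] {f : R →+* R'} (hf : Function.Surjective f) (F : (ι → R') → M)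
    {u : ι → R} (hu : u ∈ primitiveVectors ι R) :
    #(primitiveVectors ι R') • ∑ g : GL ι R, F (f ∘ (g • u)) =
      Fintype.card (GL ι R) • ∑ v ∈ primitiveVectors ι R', F v := by
  let := MulAction.compHom (ι → R') (GeneralLinearGroup.map (n := ι) f)
  simp only [comp_GL_smul]
  refine card_smul_sum_smul_eq (G := GL ι R) (X := ι → R')
    (fun g x hx ↦ GL_smul_mem_primitiveVectors _ hx)
    (fun x hx y hy ↦ ?_) F (comp_mem_primitiveVectors f hu)
  obtain ⟨x, hx', rfl⟩ := exists_mem_primitiveVectors_comp_eq hf hx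
  obtain ⟨y, hy', rfl⟩ := exists_mem_primitiveVectors_comp_eq hf hy
  obtain ⟨g, rfl⟩ := exists_GL_smul_eq hx' hy'
  exact ⟨g, (comp_GL_smul f g x).symm⟩

end LinearGroup

section VanishingOrder

open Polynomial

variable {ι F : Type*} [Fintype ι] [CommRing F]

theorem emultiplicity_X_le_of_coeff_ne_zero {f : F[X]} {m : ℕ} (h : f.coeff m ≠ 0) :
    emultiplicity X f ≤ m := by
  by_contra! hlt
  exact h (X_pow_dvd_iff.1 (pow_dvd_of_le_emultiplicity (Order.add_one_le_of_lt hlt)) m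
    m.lt_succ_self)

theorem sum_pow_padicValNat_le {p : ℕ} [Fact p.Prime] {K j : ℕ} (hj : j < p ^ K) :
    ∑ s ∈ range j, p ^ padicValNat p (s + 1) ≤ K * j := by
  have hp : p.Prime := Fact.out
  have pow_le (s) (hs : s ∈ range j) :
      p ^ padicValNat p (s + 1) ≤ ∑ i ∈ range K, if p ^ i ∣ s + 1 then p ^ i else 0 := by
    have hdvd : p ^ padicValNat p (s + 1) ∣ s + 1 := pow_padicValNat_dvd
    have hlt : padicValNat p (s + 1) < K := (Nat.pow_lt_pow_iff_right hp.one_lt).1 <|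
      ((Nat.le_of_dvd s.succ_pos hdvd).trans (mem_range.1 hs)).trans_lt hj
    simpa [hdvd] using single_le_sum (f := fun i ↦ if p ^ i ∣ s + 1 then p ^ i else 0)
      (fun i _ ↦ Nat.zero_le _) (mem_range.2 hlt)
  have sum_multiples_le (i : ℕ) : (∑ s ∈ range j, if p ^ i ∣ s + 1 then p ^ i else 0) ≤ j := by
    rw [← sum_filter, sum_const, smul_eq_mul, Nat.card_multiples]
    exact Nat.div_mul_le_self j (p ^ i)
  calc ∑ s ∈ range j, p ^ padicValNat p (s + 1)
      ≤ ∑ i ∈ range K, ∑ s ∈ range j, if p ^ i ∣ s + 1 then p ^ i else 0 :=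
        (sum_le_sum pow_le).trans_eq sum_comm
    _ ≤ K * j := by simpa using sum_le_sum fun i (_ : i ∈ range K) ↦ sum_multiples_le i

theorem emultiplicity_X_one_add_X_pow_sub_one_le (p : ℕ) [Fact p.Prime] [CharP F p] {s : ℕ}
    (hs : s ≠ 0) :
    emultiplicity X ((1 + X : F[X]) ^ s - 1) ≤ p ^ padicValNat p s := by
  set q := p ^ padicValNat p s
  have hq : 0 < q := Nat.pow_pos (Nat.Prime.pos Fact.out)
  have hndvd : ¬ p ∣ s / q := by
    simpa only [q, ← Nat.factorization_def s Fact.out] using Nat.not_dvd_ordCompl Fact.out hs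
  have expand_eq : (1 + X : F[X]) ^ s = expand F q ((1 + X) ^ (s / q)) := by
    conv_lhs => rw [← Nat.mul_div_cancel' (pow_padicValNat_dvd (p := p) (n := s)), pow_mul,
      add_pow_char_pow]
    simp [q]
  have coeff_eq : ((1 + X : F[X]) ^ s - 1).coeff q = (s / q : ℕ) := by
    have := coeff_expand_mul hq ((1 + X : F[X]) ^ (s / q)) 1
    rw [one_mul] at this
    rw [coeff_sub, coeff_one, if_neg hq.ne', sub_zero, expand_eq, this, coeff_one_add_X_pow,
      Nat.choose_one_right]
  exact_mod_cast emultiplicity_X_le_of_coeff_ne_zero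
    (by rwa [coeff_eq, Ne, CharP.cast_eq_zero_iff F p])

theorem emultiplicity_X_one_add_X_pow_eq_zero [Nontrivial F] (s : ℕ) :
    emultiplicity X ((1 + X : F[X]) ^ s) = 0 :=
  le_zero_iff.1 <| emultiplicity_X_le_of_coeff_ne_zero (m := 0) <| by
    simp [coeff_zero_eq_eval_zero]

theorem emultiplicity_X_prod_range_le [IsDomain F] (p : ℕ) [Fact p.Prime] [CharP F p] {K j : ℕ}
    (hj : j < p ^ K) :
    emultiplicity X (∏ s ∈ range j, ((1 + X : F[X]) ^ j - (1 + X) ^ s)) ≤ (K * j : ℕ) := by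
  have factor_le (s) (hs : s ∈ range j) :
      emultiplicity X ((1 + X : F[X]) ^ j - (1 + X) ^ s) ≤
        (p ^ padicValNat p (j - 1 - s + 1) : ℕ) := by
    rw [mem_range] at hs
    have hpos : j - 1 - s + 1 ≠ 0 := Nat.succ_ne_zero _
    have factorization : (1 + X : F[X]) ^ j - (1 + X) ^ s =
        (1 + X) ^ s * ((1 + X) ^ (j - 1 - s + 1) - 1) := by
      rw [mul_sub, ← pow_add, mul_one]
      congr
      omega
    rw [factorization, emultiplicity_mul prime_X, emultiplicity_X_one_add_X_pow_eq_zero, zero_add]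
    exact_mod_cast emultiplicity_X_one_add_X_pow_sub_one_le p hpos
  rw [emultiplicity_prod prime_X]
  calc _ ≤ ∑ s ∈ range j, ((p ^ padicValNat p (j - 1 - s + 1) : ℕ) : ℕ∞) := sum_le_sum factor_le
    _ ≤ (K * j : ℕ) := by
        rw [sum_range_reflect fun s ↦ ((p ^ padicValNat p (s + 1) : ℕ) : ℕ∞)]
        exact_mod_cast sum_pow_padicValNat_le hj

/-- The polynomial `∑ c_e (1 + X) ^ (u · e)`, whose `j`-th coefficient is the pairing of the
coefficient vector `c` with the function `e ↦ (u · e).choose j`. -/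
noncomputable def binomialSum (J : Finset (ι → ℕ)) (c : (ι → ℕ) → F) (u : ι → ℕ) : F[X] :=
  ∑ e ∈ J, C (c e) * (1 + X) ^ (u ⬝ᵥ e)

theorem dvd_sum_mul_prod_eval_of_dvd_binomialSum {J : Finset (ι → ℕ)} {c : (ι → ℕ) → F}
    {f : F[X]} (h : ∀ u, f ∣ binomialSum J c u) (Q : ι → F[X][X]) :
    f ∣ ∑ e ∈ J, C (c e) * ∏ i, (Q i).eval ((1 + X) ^ e i) := by
  classical
  have expansion : ∑ e ∈ J, C (c e) * ∏ i, (Q i).eval ((1 + X) ^ e i) =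
      ∑ u ∈ Fintype.piFinset fun i ↦ range ((Q i).natDegree + 1),
        (∏ i, (Q i).coeff (u i)) * binomialSum J c u := by
    simp only [binomialSum, mul_sum]
    rw [sum_comm]
    refine sum_congr rfl fun e _ ↦ ?_
    simp only [eval_eq_sum_range, prod_univ_sum, mul_sum]
    refine sum_congr rfl fun u _ ↦ ?_
    simp only [prod_mul_distrib, ← pow_mul, prod_pow_eq_pow_sum, dotProduct, mul_comm (e _)]
    ring
  rw [expansion]
  exact dvd_sum fun u _ ↦ (h u).mul_left _

theorem eq_zero_of_X_pow_dvd_binomialSum [IsDomain F] (p : ℕ) [Fact p.Prime] [CharP F p]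
    {K m : ℕ} {J : Finset (ι → ℕ)} (hJ : ∀ e ∈ J, ∀ i, e i < p ^ K)
    (hJm : ∀ e ∈ J, K * ∑ i, e i < m) {c : (ι → ℕ) → F}
    (h : ∀ u, (X : F[X]) ^ m ∣ binomialSum J c u) :
    ∀ e ∈ J, c e = 0 := by
  classical
  by_contra! ⟨e₀, he₀, hce₀⟩
  obtain ⟨e', he', e'_max⟩ := {e ∈ J | c e ≠ 0}.exists_maximal ⟨e₀, mem_filter.2 ⟨he₀, hce₀⟩⟩
  obtain ⟨heJ, hce⟩ := mem_filter.1 he'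
  -- `Q i` vanishes at `(1 + X) ^ s` for `s < e' i`, so by maximality it isolates the term `e'`.
  let Q (i : ι) : F[X][X] := ∏ s ∈ range (e' i), (X - C ((1 + X) ^ s))
  have eval_Q (i y) : (Q i).eval y = ∏ s ∈ range (e' i), (y - (1 + X) ^ s) := by
    simp [Q, eval_prod]
  have sum_eq_single : ∑ e ∈ J, C (c e) * ∏ i, (Q i).eval ((1 + X) ^ e i) =
      C (c e') * ∏ i, (Q i).eval ((1 + X) ^ e' i) := by
    refine sum_eq_single e' (fun e he hne ↦ ?_) (absurd heJ ·)
    by_cases hc : c e = 0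
    · simp [hc]
    obtain ⟨i, hi⟩ : ∃ i, e i < e' i := by
      by_contra! hle
      exact hne ((e'_max (mem_filter.2 ⟨he, hc⟩) hle).antisymm hle)
    rw [prod_eq_zero (mem_univ i), mul_zero]
    rw [eval_Q, prod_eq_zero (mem_range.2 hi) (sub_self _)]
  have order_le : emultiplicity X (C (c e') * ∏ i, (Q i).eval ((1 + X) ^ e' i)) ≤
      (K * ∑ i, e' i : ℕ) := by
    rw [emultiplicity_mul prime_X, emultiplicity_prod prime_X, mul_sum]
    have : emultiplicity X (C (c e')) ≤ ((0 : ℕ) : ℕ∞) :=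
      emultiplicity_X_le_of_coeff_ne_zero (by simpa using hce)
    rw [le_zero_iff.1 this, zero_add]
    push_cast
    refine sum_le_sum fun i _ ↦ ?_
    rw [eval_Q]
    exact_mod_cast emultiplicity_X_prod_range_le p (hJ e' heJ i)
  have order_ge := le_emultiplicity_of_pow_dvd
    (sum_eq_single ▸ dvd_sum_mul_prod_eval_of_dvd_binomialSum h Q)
  exact (hJm e' heJ).not_ge (by exact_mod_cast order_ge.trans order_le)

theorem binomialSum_smul (p : ℕ) [Fact p.Prime] [CharP F p] (J : Finset (ι → ℕ))
    (c : (ι → ℕ) → F) (u : ι → ℕ) :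
    binomialSum J c (p • u) = expand F p (binomialSum J c u) := by
  rw [binomialSum, binomialSum, map_sum]
  refine sum_congr rfl fun e _ ↦ ?_
  rw [smul_dotProduct, smul_eq_mul, pow_mul, add_pow_char]
  simp

theorem X_pow_dvd_binomialSum_of_primitive [Nonempty ι] (p : ℕ) [Fact p.Prime] [CharP F p]
    {m : ℕ} {J : Finset (ι → ℕ)} {c : (ι → ℕ) → F}
    (h : ∀ u : ι → ℕ, (∃ i, ¬ p ∣ u i) → (X : F[X]) ^ m ∣ binomialSum J c u) (u : ι → ℕ) :
    (X : F[X]) ^ m ∣ binomialSum J c u := by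
  have hp : p.Prime := Fact.out
  induction hs : ∑ i, u i using Nat.strong_induction_on generalizing u with | _ s ih
  by_cases hu : ∃ i, ¬ p ∣ u i
  · exact h u hu
  push Not at hu
  choose v hv using hu
  obtain rfl : u = p • v := funext hv
  rcases eq_or_ne v 0 with rfl | hv₀
  · -- The constant polynomial `binomialSum J c 0` is the constant coefficient of any other one.
    rcases m.eq_zero_or_pos with rfl | hm
    · simp
    have coeff_zero := X_pow_dvd_iff.1 (h 1 ⟨Classical.arbitrary ι, hp.not_dvd_one⟩) 0 hm
    have sum_eq_zero : ∑ e ∈ J, c e = 0 := by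
      simpa [binomialSum, coeff_zero_eq_eval_zero, eval_finsetSum] using coeff_zero
    have binomialSum_zero : binomialSum J c 0 = C (∑ e ∈ J, c e) := by
      simp [binomialSum, map_sum]
    rw [smul_zero, binomialSum_zero, sum_eq_zero, map_zero]
    exact dvd_zero _
  · have sum_pos : 0 < ∑ i, v i := by
      obtain ⟨i, hi⟩ := Function.ne_iff.1 hv₀
      exact sum_pos_iff.2 ⟨i, mem_univ i, Nat.pos_of_ne_zero hi⟩
    have hlt : ∑ i, v i < s := by
      simpa [← hs, ← mul_sum] using lt_mul_of_one_lt_left sum_pos hp.one_lt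
    rw [binomialSum_smul]
    refine (pow_dvd_pow_of_dvd (dvd_pow_self X hp.ne_zero) m).trans ?_
    simpa using map_dvd (expand F p) (ih _ hlt v rfl)

end VanishingOrder

section GradedBasis

open Module Submodule

variable {α F V : Type*} [Field F]

theorem exists_linearIndepOn_mem_span_image_filter_le {D : Type*} [LinearOrder D]
    [AddCommGroup V] [Module F V] (v : α → V) (deg : α → D) (s : Finset α) :
    ∃ B ⊆ s, LinearIndepOn F v (B : Set α) ∧
      ∀ x ∈ s, v x ∈ span F (v '' ({b ∈ B | deg b ≤ deg x} : Finset α)) := by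
  classical
  induction s using Finset.induction_on_max_value deg with
  | empty => exact ⟨∅, Subset.rfl, by simp, by simp⟩
  | insert a s _ hmax ih =>
    obtain ⟨B, hBs, indep, spans⟩ := ih
    have filter_le_deg_a : {b ∈ B | deg b ≤ deg a} = B :=
      filter_true_of_mem fun b hb ↦ hmax b (hBs hb)
    by_cases ha : v a ∈ span F (v '' (B : Set α))
    · refine ⟨B, hBs.trans (subset_insert a s), indep, forall_mem_insert _ _ _ |>.2 ⟨?_, spans⟩⟩
      rwa [filter_le_deg_a]
    · refine ⟨insert a B, insert_subset_insert a hBs, ?_, forall_mem_insert _ _ _ |>.2 ⟨?_, ?_⟩⟩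
      · simpa using indep.insert ha
      · exact subset_span ⟨a, by simp, rfl⟩
      · refine fun x hx ↦ span_mono (Set.image_mono ?_) (spans x hx)
        exact_mod_cast filter_subset_filter _ (subset_insert a B)

theorem exists_linearIndepOn_finrank_span_le_card_filter_lt {D : Type*} [LinearOrder D]
    [AddCommGroup V] [Module F V] (v : α → V) (deg : α → D) (s : Finset α) :
    ∃ B ⊆ s, LinearIndepOn F v (B : Set α) ∧
      ∀ m, finrank F (span F (v '' ({x ∈ s | deg x < m} : Finset α))) ≤ #{b ∈ B | deg b < m} := by
  classical
  obtain ⟨B, hBs, indep, spans⟩ := exists_linearIndepOn_mem_span_image_filter_le (F := F) v deg s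
  refine ⟨B, hBs, indep, fun m ↦ ?_⟩
  have span_le_span : span F (v '' ({x ∈ s | deg x < m} : Finset α)) ≤
      span F (({b ∈ B | deg b < m}.image v : Finset V) : Set V) := by
    refine span_le.2 (Set.image_subset_iff.2 fun x hx ↦ ?_)
    obtain ⟨hxs, hxm⟩ := mem_filter.1 hx
    rw [coe_image]
    refine span_mono (Set.image_mono ?_) (spans x hxs)
    have filter_le_subset : {b ∈ B | deg b ≤ deg x} ⊆ {b ∈ B | deg b < m} :=
      monotone_filter_right B fun b _ hb ↦ hb.trans_lt hxm
    exact_mod_cast filter_le_subset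
  exact (finrank_mono span_le_span).trans ((finrank_span_finset_le_card _).trans card_image_le)

theorem card_le_finrank_span_of_forall_sum_mul_eq_zero {β : Type*} [Finite α] {s : Set (α → F)}
    (J : Finset β) (x : β → α)
    (h : ∀ c : β → F, (∀ v ∈ s, ∑ e ∈ J, c e * v (x e) = 0) → ∀ e ∈ J, c e = 0) :
    #J ≤ finrank F (span F s) := by
  classical
  let restrict : (α → F) →ₗ[F] (J → F) := LinearMap.funLeft F F fun e ↦ x e
  have map_eq_top : (span F s).map restrict = ⊤ := by
    by_contra hne
    obtain ⟨f, hf₀, hf⟩ := exists_le_ker_of_lt_top _ (lt_top_iff_ne_top.2 hne)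
    let c (e : β) : F := if he : e ∈ J then f fun j ↦ if ⟨e, he⟩ = j then 1 else 0 else 0
    have f_eq (w : J → F) : f w = ∑ e : J, c e * w e := by
      rw [LinearMap.pi_apply_eq_sum_univ f w]
      refine sum_congr rfl fun e _ ↦ ?_
      simp only [c, e.2, dif_pos, smul_eq_mul, mul_comm]
    have c_eq_zero := h c fun v hv ↦ by
      rw [← sum_coe_sort J fun e ↦ c e * v (x e)]
      exact (f_eq _).symm.trans (hf (mem_map_of_mem (subset_span hv)))
    refine hf₀ (LinearMap.ext fun w ↦ ?_)
    rw [f_eq]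
    exact sum_eq_zero fun e _ ↦ by rw [c_eq_zero e e.2, zero_mul]
  calc #J = finrank F ((span F s).map restrict) := by
        rw [map_eq_top, finrank_top, finrank_fintype_fun_eq_card, Fintype.card_coe]
    _ ≤ finrank F (span F s) := finrank_map_le restrict _

end GradedBasis

section ChooseDot

open Polynomial Module

variable {ι : Type*} [Fintype ι] {p K : ℕ}

theorem natCast_choose_mod (F : Type*) [CommRing F] [Fact p.Prime] [CharP F p] (a : ℕ) {j : ℕ}
    (hj : j < p ^ K) : ((a % p ^ K).choose j : F) = a.choose j := by
  have X_pow_dvd : (X : F[X]) ^ p ^ K ∣ (1 + X) ^ a - (1 + X) ^ (a % p ^ K) := by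
    have X_pow_dvd_sub_one (q : ℕ) : (X : F[X]) ^ p ^ K ∣ (1 + X ^ p ^ K) ^ q - 1 := by
      have sub_dvd := sub_dvd_pow_sub_pow (1 + X ^ p ^ K : F[X]) 1 q
      rwa [one_pow, add_sub_cancel_left] at sub_dvd
    nth_rw 1 [← Nat.div_add_mod a (p ^ K)]
    rw [pow_add, pow_mul, add_pow_char_pow, one_pow, ← sub_one_mul]
    exact (X_pow_dvd_sub_one _).mul_right _
  have coeff_eq := X_pow_dvd_iff.1 X_pow_dvd j hj
  rw [coeff_sub, coeff_one_add_X_pow, coeff_one_add_X_pow, sub_eq_zero] at coeff_eq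
  exact coeff_eq.symm

/-- For `b = (u, j)`, the function `e ↦ (u · e).choose j` on `(ℤ/p^Kℤ)^ι` with values modulo `p`.
It is well defined on residue classes when `j < p ^ K`; the number `j` is its degree. -/
def chooseDot (b : (ι → ZMod (p ^ K)) × ℕ) (e : ι → ZMod (p ^ K)) : ZMod p :=
  (b.1 ⬝ᵥ e).val.choose b.2

theorem chooseDot_natCast [Fact p.Prime] (u e : ι → ℕ) {j : ℕ} (hj : j < p ^ K) :
    chooseDot (K := K) ((↑) ∘ u, j) ((↑) ∘ e) = ((u ⬝ᵥ e).choose j : ZMod p) := by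
  have dot_eq : ((↑) ∘ u ⬝ᵥ (↑) ∘ e : ZMod (p ^ K)) = (u ⬝ᵥ e : ℕ) := by simp [dotProduct]
  rw [chooseDot, dot_eq, ZMod.val_natCast, natCast_choose_mod _ _ hj]

theorem coeff_binomialSum [Fact p.Prime] (J : Finset (ι → ℕ)) (c : (ι → ℕ) → ZMod p) (u : ι → ℕ)
    {j : ℕ} (hj : j < p ^ K) :
    (binomialSum J c u).coeff j =
      ∑ e ∈ J, c e * chooseDot (K := K) ((↑) ∘ u, j) ((↑) ∘ e) := by
  simp only [binomialSum, finsetSum_coeff, coeff_C_mul, coeff_one_add_X_pow,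
    chooseDot_natCast _ _ hj]

variable [DecidableEq ι]

theorem card_le_finrank_span_chooseDot [Fact p.Prime] [Nonempty ι] {m : ℕ} (hm : m ≤ p ^ K)
    {J : Finset (ι → ℕ)} (hJ : ∀ e ∈ J, ∀ i, e i < p ^ K) (hJm : ∀ e ∈ J, K * ∑ i, e i < m) :
    #J ≤ finrank (ZMod p) (Submodule.span (ZMod p) (chooseDot (ι := ι) (p := p) (K := K) ''
      ↑(primitiveVectors ι (ZMod (p ^ K)) ×ˢ range m))) := by
  refine card_le_finrank_span_of_forall_sum_mul_eq_zero J ((↑) ∘ ·) fun c hc ↦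
    eq_zero_of_X_pow_dvd_binomialSum p hJ hJm <|
      X_pow_dvd_binomialSum_of_primitive p fun u ⟨i, hi⟩ ↦ X_pow_dvd_iff.2 fun j hj ↦ ?_
  have isUnit_natCast : IsUnit (u i : ZMod (p ^ K)) := (ZMod.isUnit_iff_coprime _ _).2
    (((Nat.Prime.coprime_iff_not_dvd Fact.out).2 hi).symm.pow_right K)
  have u_mem : (↑) ∘ u ∈ primitiveVectors ι (ZMod (p ^ K)) :=
    mem_primitiveVectors_of_isUnit (i := i) isUnit_natCast
  rw [coeff_binomialSum J c u (hj.trans_le hm)]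
  exact hc _ ⟨(_, j), by simpa [u_mem] using hj, rfl⟩

theorem linearIndependent_chooseDot_GL_smul {κ : Type*} [Fact p.Prime]
    {b : κ → (ι → ZMod (p ^ K)) × ℕ} (hb : LinearIndependent (ZMod p) fun x ↦ chooseDot (b x))
    (g : GL ι (ZMod (p ^ K))) :
    LinearIndependent (ZMod p) fun x ↦ chooseDot (g • (b x).1, (b x).2) := by
  have vecMul_surjective : Function.Surjective fun e : ι → ZMod (p ^ K) ↦ e ᵥ* g.1 := fun e ↦
    ⟨e ᵥ* g⁻¹.1, by simp [vecMul_vecMul]⟩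
  have dot_eq (u e : ι → ZMod (p ^ K)) : (g • u) ⬝ᵥ e = u ⬝ᵥ (e ᵥ* g.1) := by
    rw [dotProduct_comm, dotProduct_comm u, ← dotProduct_mulVec]
    rfl
  have eq_comp : (fun x ↦ chooseDot (g • (b x).1, (b x).2)) =
      LinearMap.funLeft (ZMod p) (ZMod p) (· ᵥ* g.1) ∘ fun x ↦ chooseDot (b x) := by
    ext x e
    simp [chooseDot, dot_eq, LinearMap.funLeft_apply]
  rw [eq_comp]
  exact hb.map' _ <| LinearMap.ker_eq_bot.2 <|
    LinearMap.funLeft_injective_of_surjective _ _ _ vecMul_surjective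

end ChooseDot

section RankLifting

open Module

variable {κ E L : Type*} [Field L]

theorem exists_mul_eq_one_of_linearIndependent_row [Finite κ] [Fintype E] [DecidableEq κ]
    {M : Matrix κ E L} (hM : LinearIndependent L M.row) : ∃ D : Matrix E κ L, M * D = 1 := by
  cases nonempty_fintype κ
  have range_eq_top : LinearMap.range M.mulVecLin = ⊤ :=
    Submodule.eq_top_of_finrank_eq (hM.rank_matrix.trans (finrank_fintype_fun_eq_card L).symm)
  exact mulVec_surjective_iff_exists_right_inverse.1 (LinearMap.range_eq_top.1 range_eq_top)

theorem linearIndependent_row_map_of_linearIndependent_row_map [Finite κ] [Finite E]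
    {A F : Type*} [CommRing A] [Field F] {π : A →+* F} (hπ : Function.Surjective π)
    {f : A →+* L} (hf : Function.Injective f) {M : Matrix κ E A}
    (hM : LinearIndependent F (M.map π).row) :
    LinearIndependent L (M.map f).row := by
  classical
  cases nonempty_fintype κ
  cases nonempty_fintype E
  obtain ⟨D, hD⟩ := exists_mul_eq_one_of_linearIndependent_row hM
  choose g hg using hπ
  have map_det : π (M * D.map g).det = 1 := by
    have map_lift : (D.map g).map π = D := by ext; simp [hg]
    rw [RingHom.map_det, RingHom.mapMatrix_apply, Matrix.map_mul, map_lift, hD, det_one]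
  have det_ne_zero : (M.map f * (D.map g).map f).det ≠ 0 := by
    rw [← Matrix.map_mul, ← RingHom.mapMatrix_apply, ← RingHom.map_det, map_ne_zero_iff f hf]
    exact fun h ↦ one_ne_zero (map_det.symm.trans (h ▸ map_zero π))
  have vecMul_injective :=
    vecMul_injective_iff.2 (linearIndependent_rows_of_det_ne_zero det_ne_zero)
  refine vecMul_injective_iff.1 (Function.Injective.of_comp (f := (· ᵥ* (D.map g).map f)) ?_)
  simpa only [Function.comp_def, vecMul_vecMul] using vecMul_injective

theorem card_le_card_of_mulVec_eq_zero {κ' : Type*} [Fintype κ] [Fintype κ'] [Fintype E]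
    {M : Matrix κ E L} {M' : Matrix κ' E L} (hM : LinearIndependent L M.row)
    (h : ∀ x, M' *ᵥ x = 0 → M *ᵥ x = 0) : Fintype.card κ ≤ Fintype.card κ' := by
  have ker_le : finrank L M'.mulVecLin.ker ≤ finrank L M.mulVecLin.ker :=
    Submodule.finrank_mono h
  have rank_add := M.mulVecLin.finrank_range_add_finrank_ker
  have rank_add' := M'.mulVecLin.finrank_range_add_finrank_ker
  calc Fintype.card κ = M.rank := hM.rank_matrix.symm
    _ ≤ M'.rank := by rw [Matrix.rank, Matrix.rank]; omega
    _ ≤ Fintype.card κ' := M'.rank_le_card_height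

end RankLifting

section CyclotomicReduction

open Polynomial

theorem exists_isPrimitiveRoot_map_eq_one (p : ℕ) [Fact p.Prime] {k : ℕ} (hk : k ≠ 0) :
    ∃ (A : Type) (_ : CommRing A) (_ : IsDomain A) (ζ : A) (π : A →+* ZMod p),
      IsPrimitiveRoot ζ (p ^ k) ∧ π ζ = 1 := by
  obtain ⟨k, rfl⟩ := Nat.exists_eq_succ_of_ne_zero hk
  set Φ := cyclotomic (p ^ (k + 1)) ℤ
  have pow_pos : 0 < p ^ (k + 1) := Nat.pow_pos (Nat.Prime.pos Fact.out)
  have : IsDomain (AdjoinRoot Φ) :=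
    AdjoinRoot.isDomain_of_prime (cyclotomic.irreducible pow_pos).prime
  have of_injective : Function.Injective (AdjoinRoot.of Φ) := by
    refine AdjoinRoot.of.injective_of_degree_ne_zero ?_
    rw [degree_cyclotomic]
    exact_mod_cast (Nat.totient_pos.2 pow_pos).ne'
  have : CharZero (AdjoinRoot Φ) := charZero_of_injective_ringHom of_injective
  have : NeZero ((p ^ (k + 1) : ℕ) : AdjoinRoot Φ) := ⟨by exact_mod_cast pow_pos.ne'⟩
  have eval₂_one : Φ.eval₂ (Int.castRingHom (ZMod p)) 1 = 0 := by
    rw [← eval_map, map_cyclotomic, eval_one_cyclotomic_prime_pow, CharP.cast_eq_zero]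
  refine ⟨AdjoinRoot Φ, inferInstance, inferInstance, AdjoinRoot.root Φ,
    AdjoinRoot.lift (Int.castRingHom (ZMod p)) 1 eval₂_one, ?_, AdjoinRoot.lift_root _⟩
  rw [← isRoot_cyclotomic_iff, ← map_cyclotomic _ (AdjoinRoot.of Φ), IsRoot.def, eval_map]
  exact AdjoinRoot.eval₂_root Φ

end CyclotomicReduction

section Simplex

variable {ι : Type*} [Fintype ι] [DecidableEq ι]

variable (ι) in
/-- The exponent vectors of total degree less than `q`. -/
def simplex (q : ℕ) : Finset (ι → ℕ) :=
  {α ∈ Fintype.piFinset fun _ ↦ range q | ∑ i, α i < q}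

theorem mem_simplex {q : ℕ} {α : ι → ℕ} : α ∈ simplex ι q ↔ ∑ i, α i < q := by
  simp only [simplex, mem_filter, Fintype.mem_piFinset, mem_range, and_iff_right_iff_imp]
  exact fun h i ↦ (single_le_sum (fun _ _ ↦ Nat.zero_le _) (mem_univ i)).trans_lt h

theorem card_piAntidiag_univ (s : ℕ) :
    #(piAntidiag (univ : Finset ι) s) = (Fintype.card ι).multichoose s := by
  rw [← map_sym_eq_piAntidiag, card_map, sym_univ, card_univ, Sym.card_sym_eq_multichoose]

theorem card_simplex (q : ℕ) :
    #(simplex ι (q + 1)) = (q + Fintype.card ι).choose (Fintype.card ι) := by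
  have filter_eq (s) (hs : s ∈ range (q + 1)) :
      {α ∈ simplex ι (q + 1) | ∑ i, α i = s} = piAntidiag (univ : Finset ι) s := by
    ext α
    simp only [mem_filter, mem_simplex, mem_piAntidiag, mem_univ, implies_true, and_true,
      and_iff_right_iff_imp]
    exact fun h ↦ h.trans_lt (mem_range.1 hs)
  calc #(simplex ι (q + 1))
      = ∑ s ∈ range (q + 1), #{α ∈ simplex ι (q + 1) | ∑ i, α i = s} :=
        card_eq_sum_card_fiberwise fun α hα ↦ mem_coe.2 (mem_range.2 (mem_simplex.1 hα))
    _ = ∑ s ∈ range (q + 1), (Fintype.card ι).multichoose s :=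
        sum_congr rfl fun s hs ↦ by rw [filter_eq s hs, card_piAntidiag_univ]
    _ = (q + Fintype.card ι).choose (Fintype.card ι) := Nat.sum_range_multichoose _ _

theorem factorial_mul_card_simplex (q : ℕ) :
    (Fintype.card ι).factorial * #(simplex ι (q + 1)) =
      ∏ i ∈ range (Fintype.card ι), (q + 1 + i) := by
  rw [card_simplex, ← Nat.ascFactorial_eq_factorial_mul_choose, Nat.ascFactorial_eq_prod_range]

theorem pow_mul_card_simplex_le [Nonempty ι] (q : ℕ) {m : ℕ} (hm : Fintype.card ι ≤ m) :
    q ^ Fintype.card ι * #(simplex ι m) ≤ (2 * m) ^ Fintype.card ι * #(simplex ι q) := by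
  set d := Fintype.card ι
  have d_pos : 0 < d := Fintype.card_pos
  cases q with
  | zero => simp [d_pos.ne']
  | succ q =>
    obtain ⟨m, rfl⟩ := Nat.exists_eq_succ_of_ne_zero (d_pos.trans_le hm).ne'
    have factor_le (i) (hi : i ∈ range d) :
        (q + 1) * (m + 1 + i) ≤ 2 * (m + 1) * (q + 1 + i) := by
      rw [mul_comm]
      have := mem_range.1 hi
      exact Nat.mul_le_mul (by omega) (by omega)
    refine Nat.le_of_mul_le_mul_left ?_ d.factorial_pos
    calc d.factorial * ((q + 1) ^ d * #(simplex ι (m + 1)))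
        = ∏ i ∈ range d, (q + 1) * (m + 1 + i) := by
          rw [mul_left_comm, factorial_mul_card_simplex, prod_mul_distrib, prod_const, card_range]
      _ ≤ ∏ i ∈ range d, 2 * (m + 1) * (q + 1 + i) := prod_le_prod' factor_le
      _ = d.factorial * ((2 * (m + 1)) ^ d * #(simplex ι (q + 1))) := by
          rw [mul_left_comm, factorial_mul_card_simplex, prod_mul_distrib, prod_const, card_range]

end Simplex

section LineCurve

open Polynomial

variable {ι A : Type*} [CommRing A] {N M : ℕ}

/-- The image of the line with base point `a` and direction `u` under `x ↦ ζ ^ x`, as a curve in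
the parameter `X = ζ ^ t - 1`. -/
noncomputable def lineCurve (ζ : A) (a : ι → ZMod N) (u : ι → ZMod M) (i : ι) : A[X] :=
  C (ζ ^ (a i).val) * (1 + X) ^ (u i).val

theorem eval_lineCurve [NeZero N] [NeZero M] (hNM : N ∣ M) {ζ : A} (hζ : ζ ^ N = 1) (a : ι → ZMod N)
    (u : ι → ZMod M) (t : ZMod N) (i : ι) :
    (lineCurve ζ a u i).eval (ζ ^ t.val - 1) =
      ζ ^ ((a + t • (ZMod.castHom hNM (ZMod N) ∘ u)) i).val := by
  have natCast_eq : (a + t • (ZMod.castHom hNM (ZMod N) ∘ u)) i =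
      ((a i).val + t.val * (u i).val : ℕ) := by
    simp [ZMod.natCast_val]
  rw [natCast_eq, ZMod.val_natCast, ← pow_eq_pow_mod _ hζ]
  simp [lineCurve, ← pow_mul, pow_add]

end LineCurve

section Contact

open Polynomial

variable {ι A : Type*} [Fintype ι] [CommRing A]

/-- The `α`-th Hasse derivative of the monomial with exponent vector `e`, evaluated at `y`. -/
def hasseMonomial (α e : ι → ℕ) (y : ι → A) : A :=
  ∏ i, y i ^ (e i - α i) * (e i).choose (α i)

theorem map_hasseMonomial {A' : Type*} [CommRing A'] (f : A →+* A') (α e : ι → ℕ) (y : ι → A) :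
    f (hasseMonomial α e y) = hasseMonomial α e (f ∘ y) := by
  simp [hasseMonomial]

theorem add_pow_eq_sum_range_of_lt (x y : A) {n N : ℕ} (h : n < N) :
    (x + y) ^ n = ∑ m ∈ range N, x ^ m * (y ^ (n - m) * n.choose m) := by
  rw [add_pow]
  simp only [mul_assoc]
  refine sum_subset (range_subset_range.2 h) fun m _ hm ↦ ?_
  rw [Nat.choose_eq_zero_of_lt (by simpa using hm), Nat.cast_zero, mul_zero, mul_zero]

theorem prod_add_pow_eq_sum_hasseMonomial [DecidableEq ι] (x y : ι → A) {e : ι → ℕ} {N : ℕ}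
    (he : ∀ i, e i < N) :
    ∏ i, (x i + y i) ^ e i =
      ∑ α ∈ Fintype.piFinset fun _ ↦ range N, (∏ i, x i ^ α i) * hasseMonomial α e y := by
  simp only [add_pow_eq_sum_range_of_lt _ _ (he _), prod_univ_sum, prod_mul_distrib, hasseMonomial]

theorem X_sub_C_pow_dvd_sum_mul_prod_pow {E : Type*} [Fintype E] (ex : E → ι → ℕ) (c : E → A)
    (P : ι → A[X]) (w : A) {m : ℕ}
    (h : ∀ α : ι → ℕ, ∑ i, α i < m →
      ∑ e, c e * hasseMonomial α (ex e) (fun i ↦ (P i).eval w) = 0) :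
    (X - C w) ^ m ∣ ∑ e, C (c e) * ∏ i, P i ^ ex e i := by
  classical
  obtain ⟨N, hN⟩ := Finite.exists_le fun x : E × ι ↦ ex x.1 x.2
  choose G hG using fun i ↦ X_sub_C_dvd_sub_C_eval (a := w) (p := P i)
  have taylor (e : E) : ∏ i, P i ^ ex e i = ∑ α ∈ Fintype.piFinset fun _ ↦ range (N + 1),
      ((X - C w) ^ (∑ i, α i) * ∏ i, G i ^ α i) *
        C (hasseMonomial α (ex e) fun i ↦ (P i).eval w) := by
    simp only [← prod_pow_eq_pow_sum, ← prod_mul_distrib, ← mul_pow, ← hG, map_hasseMonomial]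
    rw [← prod_add_pow_eq_sum_hasseMonomial _ _ fun i ↦ Nat.lt_succ_of_le (hN (e, i))]
    simp
  have sum_eq : ∑ e, C (c e) * ∏ i, P i ^ ex e i = ∑ α ∈ Fintype.piFinset fun _ ↦ range (N + 1),
      ((X - C w) ^ (∑ i, α i) * ∏ i, G i ^ α i) *
        C (∑ e, c e * hasseMonomial α (ex e) fun i ↦ (P i).eval w) := by
    simp only [taylor, map_sum, mul_sum, C_mul]
    rw [sum_comm]
    exact sum_congr rfl fun α _ ↦ sum_congr rfl fun e _ ↦ mul_left_comm _ _ _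
  rw [sum_eq]
  refine dvd_sum fun α _ ↦ ?_
  obtain hα | hα := lt_or_ge (∑ i, α i) m
  · rw [h α hα, C_0, mul_zero]
    exact dvd_zero _
  · exact ((pow_dvd_pow _ hα).mul_right _).mul_right _

variable {N M : ℕ}

/-- The monic polynomial vanishing to order `m` at the parameters `ζ ^ t - 1` for `t ∈ T`. -/
noncomputable def contactPoly (ζ : A) (T : Finset (ZMod N)) (m : ℕ) : A[X] :=
  ∏ t ∈ T, (X - C (ζ ^ t.val - 1)) ^ m

/-- The `j`-th coefficient of the monomial with exponents `e` restricted to `lineCurve ζ a u` and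
reduced modulo `contactPoly ζ T m`. As a functional on combinations of monomials it vanishes when
the contact with the curve at the parameters in `T` has order at least `m`. -/
noncomputable def contactFunctional (ζ : A) (a : ι → ZMod N) (u : ι → ZMod M) (T : Finset (ZMod N))
    (m j : ℕ) (e : ι → ZMod M) : A :=
  ((∏ i, lineCurve ζ a u i ^ (e i).val) %ₘ contactPoly ζ T m).coeff j

theorem monic_contactPoly (ζ : A) (T : Finset (ZMod N)) (m : ℕ) : (contactPoly ζ T m).Monic :=
  monic_prod_of_monic _ _ fun _ _ ↦ (monic_X_sub_C _).pow m

theorem map_contactFunctional {A' : Type*} [CommRing A'] (f : A →+* A') (ζ : A) (a : ι → ZMod N)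
    (u : ι → ZMod M) (T : Finset (ZMod N)) (m j : ℕ) (e : ι → ZMod M) :
    f (contactFunctional ζ a u T m j e) = contactFunctional (f ζ) a u T m j e := by
  rw [contactFunctional, ← coeff_map, map_modByMonic _ (monic_contactPoly ζ T m)]
  simp [contactFunctional, lineCurve, contactPoly, Polynomial.map_prod]

theorem coeff_modByMonic_X_pow [Nontrivial A] (f : A[X]) {m j : ℕ} (hj : j < m) :
    (f %ₘ X ^ m).coeff j = f.coeff j := by
  conv_rhs => rw [← modByMonic_add_div f (X ^ m)]
  rw [coeff_add, coeff_X_pow_mul', if_neg hj.not_ge, add_zero]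

theorem contactFunctional_one {p K : ℕ} [Fact p.Prime] (a : ι → ZMod N) (u : ι → ZMod (p ^ K))
    (T : Finset (ZMod N)) {m j : ℕ} (hjm : j < m * #T) (hjK : j < p ^ K) :
    contactFunctional (1 : ZMod p) a u T m j = chooseDot (u, j) := by
  ext e
  have val_dot : (u ⬝ᵥ e).val = (∑ i, (u i).val * (e i).val) % p ^ K := by
    rw [← ZMod.val_natCast]
    simp [dotProduct]
  have prod_eq : ∏ i, lineCurve (1 : ZMod p) a u i ^ (e i).val =
      (1 + X) ^ ∑ i, (u i).val * (e i).val := by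
    simp [lineCurve, ← pow_mul, prod_pow_eq_pow_sum]
  have contactPoly_eq : contactPoly (1 : ZMod p) T m = X ^ (m * #T) := by
    simp [contactPoly, pow_mul]
  rw [contactFunctional, prod_eq, contactPoly_eq, coeff_modByMonic_X_pow _ hjm,
    coeff_one_add_X_pow, chooseDot, val_dot, natCast_choose_mod _ _ hjK]

theorem contactPoly_dvd {L : Type*} [Field L] [NeZero N] {ζ : L} (hζ : IsPrimitiveRoot ζ N)
    {T : Finset (ZMod N)} {m : ℕ} {f : L[X]} (h : ∀ t ∈ T, (X - C (ζ ^ t.val - 1)) ^ m ∣ f) :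
    contactPoly ζ T m ∣ f := by
  refine prod_dvd_of_coprime (fun t _ t' _ ne ↦ ?_) h
  refine IsCoprime.pow (isCoprime_X_sub_C_of_isUnit_sub (sub_ne_zero.2 fun heq ↦ ne ?_).isUnit)
  exact ZMod.val_injective N
    (hζ.pow_inj (ZMod.val_lt t) (ZMod.val_lt t') (sub_left_injective heq))

theorem sum_mul_contactFunctional_eq_zero [DecidableEq ι] {L : Type*} [Field L] [NeZero N]
    [NeZero M] (hNM : N ∣ M) {ζ : L} (hζ : IsPrimitiveRoot ζ N) (a : ι → ZMod N) (u : ι → ZMod M)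
    {T : Finset (ZMod N)} {m : ℕ} {c : (ι → ZMod M) → L}
    (h : ∀ t ∈ T, ∀ α : ι → ℕ, ∑ i, α i < m → ∑ e, c e * hasseMonomial α (fun i ↦ (e i).val)
      (fun i ↦ ζ ^ ((a + t • (ZMod.castHom hNM (ZMod N) ∘ u)) i).val) = 0) (j : ℕ) :
    ∑ e, c e * contactFunctional ζ a u T m j e = 0 := by
  have dvd : contactPoly ζ T m ∣ ∑ e, C (c e) * ∏ i, lineCurve ζ a u i ^ (e i).val := by
    refine contactPoly_dvd hζ fun t ht ↦ ?_
    have hasse_eq_zero (α : ι → ℕ) (hα : ∑ i, α i < m) :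
        ∑ e, c e * hasseMonomial α (fun i ↦ (e i).val)
          (fun i ↦ (lineCurve ζ a u i).eval (ζ ^ t.val - 1)) = 0 := by
      simpa only [eval_lineCurve hNM hζ.pow_eq_one] using h t ht α hα
    exact X_sub_C_pow_dvd_sum_mul_prod_pow _ c (lineCurve ζ a u) _ hasse_eq_zero
  have modByMonic_eq := (modByMonic_eq_zero_iff_dvd (monic_contactPoly ζ T m)).2 dvd
  have coeff_eq := congrArg (coeff · j) modByMonic_eq
  simpa only [contactFunctional, ← modByMonicHom_apply, map_sum, finsetSum_coeff,
    ← smul_eq_C_mul, map_smul, coeff_smul, smul_eq_mul, coeff_zero] using coeff_eq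

theorem card_le_card_mul_card_simplex [DecidableEq ι] {p k K m : ℕ} [Fact p.Prime] (hk : k ≠ 0)
    (hkK : p ^ k ∣ p ^ K) (S : Finset (ι → ZMod (p ^ k))) {κ : Type*} [Fintype κ]
    {b : κ → (ι → ZMod (p ^ K)) × ℕ} (hb : LinearIndependent (ZMod p) fun x ↦ chooseDot (b x))
    (hbS : ∀ x, (b x).2 < m * kakeyaMaximal S (ZMod.castHom hkK (ZMod (p ^ k)) ∘ (b x).1))
    (hbK : ∀ x, (b x).2 < p ^ K) :
    Fintype.card κ ≤ #S * #(simplex ι m) := by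
  obtain ⟨A, _, _, ζ, π, hζ, hπ⟩ := exists_isPrimitiveRoot_map_eq_one p hk
  let f := algebraMap A (FractionRing A)
  have f_injective : Function.Injective f := IsFractionRing.injective A _
  choose a ha using fun x ↦ exists_kakeyaMaximal_eq S (ZMod.castHom hkK (ZMod (p ^ k)) ∘ (b x).1)
  let T (x : κ) : Finset (ZMod (p ^ k)) :=
    {t | a x + t • (ZMod.castHom hkK (ZMod (p ^ k)) ∘ (b x).1) ∈ S}
  let B : Matrix κ (ι → ZMod (p ^ K)) A :=
    of fun x ↦ contactFunctional ζ (a x) (b x).1 (T x) m (b x).2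
  have map_row : (B.map π).row = fun x ↦ chooseDot (b x) := by
    ext1 x
    have lt_mul_card : (b x).2 < m * #(T x) := by simpa only [T, ← ha] using hbS x
    rw [← contactFunctional_one (a x) _ (T x) lt_mul_card (hbK x)]
    ext e
    simp [B, map_contactFunctional, hπ]
  let V : Matrix (S × simplex ι m) (ι → ZMod (p ^ K)) (FractionRing A) :=
    of fun q e ↦ hasseMonomial q.2 (fun i ↦ (e i).val) fun i ↦ f ζ ^ (q.1.1 i).val
  have rows_independent : LinearIndependent (FractionRing A) (B.map f).row :=
    linearIndependent_row_map_of_linearIndependent_row_map (ZMod.ringHom_surjective π)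
      f_injective (map_row ▸ hb)
  have card_le : Fintype.card κ ≤ Fintype.card (S × simplex ι m) := by
    refine card_le_card_of_mulVec_eq_zero (M' := V) rows_independent fun c hc ↦ ?_
    ext x
    have sum_eq_zero := sum_mul_contactFunctional_eq_zero hkK (hζ.map_of_injective f_injective)
      (a x) (b x).1 (T := T x) (m := m) (c := c) (fun t ht α hα ↦ ?_) (b x).2
    · simpa [mulVec, dotProduct, B, map_contactFunctional, mul_comm] using sum_eq_zero
    · have mem_S := (mem_filter_univ t).1 ht
      simpa [mulVec, dotProduct, V, mul_comm] using
        congrFun hc (⟨_, mem_S⟩, ⟨α, mem_simplex.2 hα⟩)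
  simpa using card_le

end Contact

section PrimePower

variable {ι : Type*} [Fintype ι] [DecidableEq ι]

theorem sum_card_filter_le_of_forall_GL {R R' : Type*} [CommRing R] [Fintype R] [DecidableEq R]
    [IsLocalRing R] [CommRing R'] [Fintype R'] [DecidableEq R'] [IsLocalRing R'] {f : R →+* R'}
    (hf : Function.Surjective f) {α : Type*} {B : Finset α} {u : α → ι → R}
    (hu : ∀ b ∈ B, u b ∈ primitiveVectors ι R) (P : α → (ι → R') → Prop)
    [∀ b, DecidablePred (P b)] {c : ℕ} (hc : ∀ g : GL ι R, #{b ∈ B | P b (f ∘ (g • u b))} ≤ c) :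
    ∑ v ∈ primitiveVectors ι R', #{b ∈ B | P b v} ≤ #(primitiveVectors ι R') * c := by
  refine Nat.le_of_mul_le_mul_left ?_ (Fintype.card_pos (α := GL ι R))
  simp only [card_filter] at hc ⊢
  calc Fintype.card (GL ι R) * ∑ v ∈ primitiveVectors ι R', ∑ b ∈ B, (if P b v then 1 else 0)
      = ∑ b ∈ B, Fintype.card (GL ι R) • ∑ v ∈ primitiveVectors ι R', (if P b v then 1 else 0) := by
        rw [sum_comm, mul_sum]
        rfl
    _ = ∑ b ∈ B, #(primitiveVectors ι R') • ∑ g : GL ι R, (if P b (f ∘ (g • u b)) then 1 else 0) :=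
        sum_congr rfl fun b hb ↦
          (card_primitiveVectors_smul_sum_GL hf (fun v ↦ if P b v then 1 else 0) (hu b hb)).symm
    _ = #(primitiveVectors ι R') * ∑ g : GL ι R, ∑ b ∈ B, if P b (f ∘ (g • u b)) then 1 else 0 := by
        rw [sum_comm, mul_sum]
        rfl
    _ ≤ #(primitiveVectors ι R') * (Fintype.card (GL ι R) * c) := by
        gcongr
        exact sum_le_card_nsmul _ _ _ fun g _ ↦ hc g
    _ = Fintype.card (GL ι R) * (#(primitiveVectors ι R') * c) := mul_left_comm _ _ _

theorem div_pow_mul_card_simplex_le [Nonempty ι] {m K t q : ℕ} (hm : Fintype.card ι ≤ m)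
    (hK : K ≠ 0) (hq : m * t ≤ K * q) :
    ((t : ℝ) / (2 * K)) ^ Fintype.card ι * #(simplex ι m) ≤ #(simplex ι q) := by
  have m_pos : (0 : ℝ) < m := mod_cast (Fintype.card_pos (α := ι)).trans_le hm
  have ratio_le : (t : ℝ) / (2 * K) ≤ q / (2 * m) := by
    rw [div_le_div_iff₀ (by positivity) (by positivity)]
    have : (m * t : ℝ) ≤ K * q := mod_cast hq
    linarith
  calc ((t : ℝ) / (2 * K)) ^ Fintype.card ι * #(simplex ι m)
      ≤ (q / (2 * m)) ^ Fintype.card ι * #(simplex ι m) := by gcongr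
    _ = q ^ Fintype.card ι * #(simplex ι m) / (2 * m) ^ Fintype.card ι := by
        rw [div_pow, div_mul_eq_mul_div]
    _ ≤ #(simplex ι q) := by
        rw [div_le_iff₀ (by positivity), mul_comm (#(simplex ι q) : ℝ)]
        exact mod_cast pow_mul_card_simplex_le q hm

variable {p : ℕ} [Fact p.Prime]

theorem exists_linearIndepOn_chooseDot [Nonempty ι] {K m : ℕ} (hK : K ≠ 0)
    (hm : Fintype.card ι ≤ m) :
    ∃ B ⊆ primitiveVectors ι (ZMod (p ^ K)) ×ˢ range (p ^ K),
      LinearIndepOn (ZMod p) chooseDot (B : Set ((ι → ZMod (p ^ K)) × ℕ)) ∧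
      ∀ t, m * t ≤ p ^ K →
        ((t : ℝ) / (2 * K)) ^ Fintype.card ι * #(simplex ι m) ≤ #{b ∈ B | b.2 < m * t} := by
  obtain ⟨B, B_subset, indep, finrank_le⟩ :=
    exists_linearIndepOn_finrank_span_le_card_filter_lt (F := ZMod p) chooseDot Prod.snd
      (primitiveVectors ι (ZMod (p ^ K)) ×ˢ range (p ^ K))
  refine ⟨B, B_subset, indep, fun t ht ↦ ?_⟩
  have K_pos := Nat.pos_of_ne_zero hK
  have lt_of_mem {e : ι → ℕ} (he : e ∈ simplex ι (m * t ⌈/⌉ K)) : K * ∑ i, e i < m * t :=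
    (lt_iff_lt_of_le_iff_le (ceilDiv_le_iff_le_mul K_pos)).1 (mem_simplex.1 he)
  have coord_lt {e : ι → ℕ} (he : e ∈ simplex ι (m * t ⌈/⌉ K)) (i : ι) : e i < p ^ K :=
    calc e i ≤ ∑ j, e j := single_le_sum (fun _ _ ↦ Nat.zero_le _) (mem_univ i)
      _ ≤ K * ∑ j, e j := Nat.le_mul_of_pos_left _ K_pos
      _ < p ^ K := (lt_of_mem he).trans_le ht
  have filter_eq : {x ∈ primitiveVectors ι (ZMod (p ^ K)) ×ˢ range (p ^ K) | x.2 < m * t} =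
      primitiveVectors ι (ZMod (p ^ K)) ×ˢ range (m * t) := by
    ext x
    simp only [mem_filter, mem_product, mem_range]
    exact ⟨fun h ↦ ⟨h.1.1, h.2⟩, fun h ↦ ⟨⟨h.1, h.2.trans_le ht⟩, h.2⟩⟩
  have card_le : #(simplex ι (m * t ⌈/⌉ K)) ≤ #{b ∈ B | b.2 < m * t} :=
    (card_le_finrank_span_chooseDot ht (fun e he ↦ coord_lt he) fun e he ↦ lt_of_mem he).trans
      (filter_eq ▸ finrank_le (m * t))
  exact (div_pow_mul_card_simplex_le hm hK (le_smul_ceilDiv K_pos)).trans (mod_cast card_le)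

theorem card_filter_lt_kakeyaMaximal_GL_le {k K m : ℕ} (hk : k ≠ 0) (hkK : p ^ k ∣ p ^ K)
    {B : Finset ((ι → ZMod (p ^ K)) × ℕ)}
    (hB : LinearIndepOn (ZMod p) chooseDot (B : Set ((ι → ZMod (p ^ K)) × ℕ)))
    (hBK : ∀ b ∈ B, b.2 < p ^ K) (S : Finset (ι → ZMod (p ^ k))) (g : GL ι (ZMod (p ^ K))) :
    #{b ∈ B | b.2 < m * kakeyaMaximal S (ZMod.castHom hkK (ZMod (p ^ k)) ∘ (g • b.1))} ≤
      #S * #(simplex ι m) := by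
  rw [← Fintype.card_coe]
  have indep : LinearIndepOn (ZMod p) chooseDot
      (({b ∈ B | b.2 < m * kakeyaMaximal S (ZMod.castHom hkK (ZMod (p ^ k)) ∘ (g • b.1))} :
        Finset _) : Set ((ι → ZMod (p ^ K)) × ℕ)) :=
    hB.mono (mod_cast filter_subset _ _)
  exact card_le_card_mul_card_simplex hk hkK S (b := fun x ↦ (g • x.1.1, x.1.2))
    (linearIndependent_chooseDot_GL_smul indep g) (fun x ↦ (mem_filter.1 x.2).2)
    fun x ↦ hBK x.1 (mem_filter.1 x.2).1

theorem isLocalRing_zmod_prime_pow {k : ℕ} (hk : k ≠ 0) : IsLocalRing (ZMod (p ^ k)) :=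
  have : Fact (1 < p ^ k) := ⟨Nat.one_lt_pow hk (Fact.out : p.Prime).one_lt⟩
  .of_surjective' (PadicInt.toZModPow (p := p) k) (ZMod.ringHom_surjective _)

theorem KakeyaBound.zmod_prime_pow [Nonempty ι] {k l : ℕ} (hk : k ≠ 0)
    (hl : Fintype.card ι ≤ p ^ l) :
    KakeyaBound ι (ZMod (p ^ k)) (Fintype.card ι) (1 / (2 * (k + l))) := by
  intro S
  have := isLocalRing_zmod_prime_pow (p := p) hk
  have := isLocalRing_zmod_prime_pow (p := p) (k := k + l) (by omega)
  have dvd : p ^ k ∣ p ^ (k + l) := pow_dvd_pow p (Nat.le_add_right k l)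
  obtain ⟨B, B_subset, indep, le_card⟩ :=
    exists_linearIndepOn_chooseDot (ι := ι) (p := p) (K := k + l) (by omega) hl
  have mem_of_mem (b) (hb : b ∈ B) := mem_product.1 (B_subset hb)
  have card_le (g : GL ι (ZMod (p ^ (k + l)))) :=
    card_filter_lt_kakeyaMaximal_GL_le (m := p ^ l) hk dvd indep
      (fun b hb ↦ mem_range.1 (mem_of_mem b hb).2) S g
  have sum_card_le := sum_card_filter_le_of_forall_GL (ZMod.ringHom_surjective _)
    (fun b hb ↦ (mem_of_mem b hb).1) (fun b v ↦ b.2 < p ^ l * kakeyaMaximal S v) card_le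
  have simplex_pos : 0 < #(simplex ι (p ^ l)) :=
    card_pos.2 ⟨0, mem_simplex.2 (by simpa using Fintype.card_pos.trans_le hl)⟩
  have mul_kakeyaMaximal_le (v) : p ^ l * kakeyaMaximal S v ≤ p ^ (k + l) := by
    rw [add_comm, pow_add]
    gcongr
    exact (kakeyaMaximal_le_card S v).trans_eq (ZMod.card _)
  refine le_of_mul_le_mul_right ?_ (Nat.cast_pos (α := ℝ).2 simplex_pos)
  calc (∑ v ∈ primitiveVectors ι (ZMod (p ^ k)),
        (1 / (2 * (k + l)) * kakeyaMaximal S v : ℝ) ^ Fintype.card ι) * #(simplex ι (p ^ l))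
      ≤ ∑ v ∈ primitiveVectors ι (ZMod (p ^ k)),
          (#{b ∈ B | b.2 < p ^ l * kakeyaMaximal S v} : ℝ) := by
        rw [sum_mul]
        refine sum_le_sum fun v _ ↦ ?_
        rw [one_div_mul_eq_div, ← Nat.cast_add]
        exact le_card _ (mul_kakeyaMaximal_le v)
    _ ≤ #(primitiveVectors ι (ZMod (p ^ k))) * #S * #(simplex ι (p ^ l)) := by
        rw [mul_assoc]
        exact mod_cast sum_card_le

theorem KakeyaBound.zmod_prime_pow_clog [Nonempty ι] {k : ℕ} (hk : k ≠ 0) :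
    KakeyaBound ι (ZMod (p ^ k)) (Fintype.card ι)
      (1 / (2 * (k + Nat.clog p (Fintype.card ι)))) :=
  .zmod_prime_pow hk (Nat.le_pow_clog (Fact.out : p.Prime).one_lt _)

end PrimePower

theorem KakeyaBound.pi_fin {ι : Type*} [Fintype ι] [DecidableEq ι] {r d : ℕ} (hd : d ≠ 0)
    {R : Fin (r + 1) → Type*} [∀ i, CommRing (R i)] [∀ i, Fintype (R i)] [∀ i, DecidableEq (R i)]
    {C : Fin (r + 1) → ℝ} (hC : ∀ i, 0 ≤ C i) (h : ∀ i, KakeyaBound ι (R i) d (C i)) :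
    KakeyaBound ι (∀ i, R i) d
      ((∏ j : Fin r, 1 / (Real.log (Fintype.card (R j.castSucc)) + 1)) * ∏ i, C i) := by
  induction r with
  | zero => simpa using (h 0).of_ringEquiv (RingEquiv.piUnique (ι := Fin 1) R).symm
  | succ r ih =>
    let w (i) : ℝ := 1 / (Real.log (Fintype.card (R i)) + 1)
    have w_nonneg (i) : 0 ≤ w i :=
      one_div_nonneg.2 (add_nonneg (Real.log_natCast_nonneg _) zero_le_one)
    have tail : KakeyaBound ι (∀ i : Fin (r + 1), R i.succ) d
        ((∏ j : Fin r, w j.castSucc.succ) * ∏ i : Fin (r + 1), C i.succ) :=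
      ih (fun i ↦ hC i.succ) (fun i ↦ h i.succ)
    have tail_nonneg : 0 ≤ (∏ j : Fin r, w j.castSucc.succ) * ∏ i : Fin (r + 1), C i.succ :=
      mul_nonneg (prod_nonneg fun j _ ↦ w_nonneg _) (prod_nonneg fun i _ ↦ hC i.succ)
    let e : R 0 × (∀ i : Fin (r + 1), R i.succ) ≃+* ∀ i, R i :=
      { Fin.consEquiv R with
        map_mul' := fun x y ↦ funext (Fin.cases rfl fun _ ↦ rfl)
        map_add' := fun x y ↦ funext (Fin.cases rfl fun _ ↦ rfl) }
    convert ((h 0).prod hd (hC 0) tail_nonneg tail).of_ringEquiv e using 1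
    change (∏ j, w (Fin.castSucc j)) * ∏ i, C i = C 0 * (_ * _) * w 0
    rw [Fin.prod_univ_succ (n := r), Fin.prod_univ_succ (n := r + 1)]
    simp only [Fin.castSucc_zero, Fin.castSucc_succ]
    ring

theorem KakeyaBound.zmod_prod_prime_pow {ι : Type*} [Fintype ι] [DecidableEq ι] [Nonempty ι]
    {r : ℕ} {p k : Fin (r + 1) → ℕ} (hp : ∀ i, (p i).Prime) (hpd : Function.Injective p)
    (hk : ∀ i, k i ≠ 0) [NeZero (∏ i, p i ^ k i)] :
    KakeyaBound ι (ZMod (∏ i, p i ^ k i)) (Fintype.card ι)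
      ((∏ j : Fin r, 1 / (k j.castSucc * Real.log (p j.castSucc) + 1)) *
        ∏ i, 1 / (2 * (k i + Nat.clog (p i) (Fintype.card ι) : ℝ))) := by
  have (i : Fin (r + 1)) : Fact (p i).Prime := ⟨hp i⟩
  have coprime : Pairwise (Function.onFun Nat.Coprime fun i ↦ p i ^ k i) := fun i j hij ↦
    Nat.Coprime.pow _ _ ((Nat.coprime_primes (hp i) (hp j)).2 (hpd.ne hij))
  have bound := (KakeyaBound.pi_fin (ι := ι) Fintype.card_ne_zero (fun i ↦ by positivity)
    fun i ↦ .zmod_prime_pow_clog (p := p i) (hk i)).of_ringEquiv (ZMod.prodEquivPi _ coprime).symm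
  simpa only [ZMod.card, Nat.cast_pow, Real.log_pow] using bound

theorem prod_filter_val_lt {M : Type*} [CommMonoid M] {r : ℕ} (f : Fin (r + 1) → M) :
    ∏ j with j.val < r, f j = ∏ j : Fin r, f j.castSucc := by
  simp [prod_filter, Fin.prod_univ_castSucc]

theorem ceil_log_div_log_eq_clog (b n : ℕ) : ⌈Real.log n / Real.log b⌉ = Nat.clog b n := by
  rw [Real.log_div_log, Real.ceil_logb_natCast n.cast_nonneg, Int.clog_natCast]

theorem stmt0 (n r : ℕ) (hn : 1 ≤ n) (hr : 1 ≤ r)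
    (p k : Fin r → ℕ) (hp : ∀ i, (p i).Prime) (hpd : Function.Injective p)
    (hk : ∀ i, 1 ≤ k i) (N : ℕ) [NeZero N] (hN : N = ∏ i, p i ^ k i)
    (P : Finset (Fin n → ZMod N)) (hP : IsProjRepSet N n P)
    (S : Finset (Fin n → ZMod N)) :
    (S.card : ℝ) ≥
      ((∏ j ∈ Finset.univ.filter (fun j : Fin r => (j : ℕ) < r - 1),
          1 / ((k j : ℝ) * Real.log (p j) + 1)) *
        ∏ i : Fin r, 1 / (2 * ((k i : ℝ) + ((⌈Real.log n / Real.log (p i)⌉ : ℤ) : ℝ)))) ^ n *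
      (P.card : ℝ)⁻¹ *
      ∑ u ∈ P, ((Finset.univ.sup fun a : Fin n → ZMod N => ((lineF a u) ∩ S).card : ℕ) : ℝ) ^ n := by
  obtain ⟨r, rfl⟩ := Nat.exists_eq_add_of_le' hr
  subst hN
  have : NeZero n := ⟨Nat.one_le_iff_ne_zero.1 hn⟩
  have bound := KakeyaBound.zmod_prod_prime_pow (ι := Fin n) hp hpd
    fun i ↦ Nat.one_le_iff_ne_zero.1 (hk i)
  rw [Fintype.card_fin] at bound
  simp only [Nat.add_sub_cancel, prod_filter_val_lt, ceil_log_div_log_eq_clog, Int.cast_natCast]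
  refine hP.mul_sum_sup_lineF_pow_le (mul_nonneg ?_ ?_) bound S
  · exact prod_nonneg fun j _ ↦ by have := Real.log_natCast_nonneg (p j.castSucc); positivity
  · exact prod_nonneg fun i _ ↦ by positivity
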